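/- arXiv:2406.07838 — 3 statements merged into one kernel-verified Lean document; each statement's English description precedes it below -/
import Mathlib

section
/- Let n ≥ 1 and N = (N_0, …, N_n) ∈ ℤ^{n+1} with N_0 + ⋯ + N_n = 0. Write s_k = ∑_{j=0}^{k} N_j and c_k = N_{n−k}/(k+1) + s_{n−k}/(k(k+1)) for 1 ≤ k ≤ n. If s_k ≥ max{0, −(n−k)·N_k} and N_k ≥ 1/(n−k) − (n−k+1) for all 0 ≤ k ≤ n−1, then K_n(N) ≥ (1/(n² · e^n · (n!)²)) · ∏_{k=1}^{n} ((c_k+1)^{c_k+1}/c_k^{c_k})^{k−1}, with the convention 0^0 = 1. -/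
open Finset

/-- The entropy-like function `h(t) = (t+1)·log(t+1) − t·log t` (with `h 0 = 0`
since `Real.log 0 = 0`). -/
noncomputable def entH (t : ℝ) : ℝ := (t + 1) * Real.log (t + 1) - t * Real.log t

/-- `f` is an integer flow on the complete graph `k_{n+1}` with netflow `N`:
`f i j` is the flow on the edge `(i,j)` for `i < j`, it vanishes for `i ≥ j`,
and the netflow at each vertex `i` is `N i`. -/
def IsIntFlow (n : ℕ) (N : Fin (n + 1) → ℤ) (f : Fin (n + 1) → Fin (n + 1) → ℕ) : Prop :=
  (∀ i j : Fin (n + 1), ¬ i < j → f i j = 0) ∧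
  ∀ i : Fin (n + 1),
    (∑ j : Fin (n + 1), if i < j then (f i j : ℤ) else 0) -
      (∑ k : Fin (n + 1), if k < i then (f k i : ℤ) else 0) = N i

/-- The Kostant partition function: the number of integer flows on the complete
graph `k_{n+1}` with netflow `N`. -/
noncomputable def Kn (n : ℕ) (N : Fin (n + 1) → ℤ) : ℕ :=
  Nat.card {f : Fin (n + 1) → Fin (n + 1) → ℕ // IsIntFlow n N f}

/-- The flow polytope of the complete graph `k_{n+1}` with netflow `N`. -/
def FlowPolytope (n : ℕ) (N : Fin (n + 1) → ℝ) : Set (Fin (n + 1) → Fin (n + 1) → ℝ) :=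
  {f | (∀ i j : Fin (n + 1), i < j → 0 ≤ f i j) ∧
    (∀ i j : Fin (n + 1), ¬ i < j → f i j = 0) ∧
    ∀ i : Fin (n + 1),
      (∑ j : Fin (n + 1), if i < j then f i j else 0) -
        (∑ k : Fin (n + 1), if k < i then f k i else 0) = N i}

/-- The flow entropy `H(f)`. -/
noncomputable def flowEntropy (n : ℕ) (N : Fin (n + 1) → ℝ)
    (f : Fin (n + 1) → Fin (n + 1) → ℝ) : ℝ :=
  (∑ i : Fin (n + 1), ∑ j : Fin (n + 1), if i < j then entH (f i j) else 0) +
  ∑ j : Fin (n + 1), if 0 < (j : ℕ) ∧ (j : ℕ) < n then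
    entH (∑ i : Fin (n + 1), if i < j then (N i - f i j) else 0) else 0

/-- Partial sums `s_k = N_0 + ⋯ + N_k`. -/
def sPartial (n : ℕ) (N : Fin (n + 1) → ℤ) (k : ℕ) : ℤ :=
  ∑ j : Fin (n + 1), if (j : ℕ) ≤ k then N j else 0

/-- Extend `(N_0,…,N_{n−1})` to the netflow vector `(N_0,…,N_{n−1},−∑ N_i)`. -/
def extend (n : ℕ) (N : Fin n → ℤ) : Fin (n + 1) → ℤ := Fin.snoc N (-∑ i, N i)

/-- `c_k = N_{n−k}/(k+1) + s_{n−k}/(k(k+1))`. -/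
noncomputable def cAvg (n : ℕ) (N : Fin (n + 1) → ℤ) (k : ℕ) : ℝ :=
  (∑ m : Fin (n + 1), if (m : ℕ) = n - k then (N m : ℝ) else 0) / ((k : ℝ) + 1) +
  ((sPartial n N (n - k) : ℤ) : ℝ) / ((k : ℝ) * ((k : ℝ) + 1))

/-- Telescoping lower bound for sums of logarithms. -/
lemma aux_tele (c K : ℝ) (hc : 0 ≤ c) (hK : 0 < K) (m : ℕ) :
    K * (((c + m / K) * Real.log (c + m / K) - (c + m / K)) - (c * Real.log c - c)) ≤
      ∑ j ∈ Finset.range m, Real.log (c + ((j : ℝ) + 1) / K) := by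
  induction m with
  | zero => simp
  | succ m ih =>
    rw [Finset.sum_range_succ]
    have hu : 0 < c + ((m : ℝ) + 1) / K := by positivity
    have hv : 0 ≤ c + (m : ℝ) / K := by positivity
    have huv : c + ((m : ℝ) + 1) / K - (c + (m : ℝ) / K) = 1 / K := by ring
    push_cast
    generalize c + ((m : ℝ) + 1) / K = u at *
    generalize c + (m : ℝ) / K = v at *
    have key : v * Real.log u - v * Real.log v ≤ u - v := by
      rcases hv.eq_or_lt with h0 | h0
      · subst h0; simp; linarith
      · have h1 := Real.log_le_sub_one_of_pos (div_pos hu h0)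
        rw [Real.log_div hu.ne' h0.ne'] at h1
        have h2 := mul_le_mul_of_nonneg_left h1 hv
        have h3 : v * (u / v - 1) = u - v := by field_simp
        rw [h3] at h2
        linarith
    have e1 : K * (u - v) = 1 := by rw [huv]; field_simp
    have h4 : K * ((u * Real.log u - u) - (v * Real.log v - v)) ≤ Real.log u := by
      have h5 : (u * Real.log u - u) - (v * Real.log v - v) ≤ (u - v) * Real.log u := by
        linarith
      calc _ ≤ K * ((u - v) * Real.log u) := mul_le_mul_of_nonneg_left h5 hK.le
        _ = (K * (u - v)) * Real.log u := by ring
        _ = _ := by rw [e1, one_mul]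
    linarith

lemma aux_fact (d : ℕ) :
    Real.log ((d + 1).factorial : ℝ) ≤ ((d : ℝ) + 2) * Real.log ((d : ℝ) + 1) - d := by
  induction d with
  | zero => simp
  | succ d ih =>
    rw [Nat.factorial_succ (d + 1)]
    have hf : ((d + 1).factorial : ℝ) ≠ 0 := by positivity
    push_cast
    rw [Real.log_mul (by positivity) hf]
    have hx : (0 : ℝ) < (d : ℝ) + 1 := by positivity
    have hy : (0 : ℝ) < (d : ℝ) + 1 + 1 := by positivity
    have h1 := Real.log_le_sub_one_of_pos (div_pos hx hy)
    rw [Real.log_div hx.ne' hy.ne'] at h1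
    have h2 := mul_le_mul_of_nonneg_left h1 hy.le
    have h3 : ((d : ℝ) + 1 + 1) * (((d : ℝ) + 1) / ((d : ℝ) + 1 + 1) - 1) = -1 := by
      field_simp; ring
    rw [h3] at h2
    linarith

lemma aux_log_fact (d : ℕ) :
    ∑ j ∈ Finset.range d, Real.log ((j : ℝ) + 1) = Real.log (d.factorial : ℝ) := by
  induction d with
  | zero => simp
  | succ d ih =>
    rw [Finset.sum_range_succ, ih, Nat.factorial_succ]
    push_cast
    rw [Real.log_mul (by positivity) (by positivity)]
    ring

lemma aux_R (c : ℝ) (hc : 0 ≤ c) : (c + 1) ^ (c + 1) / c ^ c = Real.exp (entH c) := by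
  unfold entH
  rw [Real.exp_sub, Real.rpow_def_of_pos (by linarith), mul_comm (Real.log _)]
  rcases hc.eq_or_lt with h0 | h0
  · subst h0; simp
  · rw [Real.rpow_def_of_pos h0, mul_comm (Real.log c)]

/-- The polynomial `binom (x + d) d`. -/
noncomputable def pD (d : ℕ) (x : ℝ) : ℝ :=
  ∏ j ∈ Finset.range d, (x + (j : ℝ) + 1) / ((j : ℝ) + 1)

lemma pD_lower (d : ℕ) (c : ℝ) (hc : 0 ≤ c) :
    ((c + 1) ^ (c + 1) / c ^ c) ^ d / (Real.exp 1 * ((d : ℝ) + 1) ^ 2) ≤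
      pD d (((d : ℝ) + 1) * c) := by
  rw [aux_R c hc, ← Real.exp_nat_mul]
  have hK : (0 : ℝ) < (d : ℝ) + 1 := by positivity
  have hpos : ∀ j ∈ Finset.range d, (((d : ℝ) + 1) * c + (j : ℝ) + 1) / ((j : ℝ) + 1) ≠ 0 := by
    intro j _; positivity
  have hlog : Real.log (pD d (((d : ℝ) + 1) * c)) =
      ∑ j ∈ Finset.range d, Real.log (c + ((j : ℝ) + 1) / ((d : ℝ) + 1))
        + d * Real.log ((d : ℝ) + 1) - Real.log (d.factorial : ℝ) := by
    unfold pD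
    rw [Real.log_prod hpos, ← aux_log_fact]
    rw [eq_sub_iff_add_eq, ← Finset.sum_add_distrib]
    have : (d : ℝ) * Real.log ((d : ℝ) + 1) = ∑ j ∈ Finset.range d, Real.log ((d : ℝ) + 1) := by
      simp
    rw [this, ← Finset.sum_add_distrib]
    refine Finset.sum_congr rfl fun j _ => ?_
    rw [← Real.log_mul (by positivity) (by positivity),
      ← Real.log_mul (by positivity) (by positivity)]
    congr 1
    field_simp
    ring
  have hppos : 0 < pD d (((d : ℝ) + 1) * c) := by
    unfold pD; exact Finset.prod_pos fun j _ => by positivity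
  have h1 := aux_tele c ((d : ℝ) + 1) hc hK (d + 1)
  rw [Finset.sum_range_succ] at h1
  push_cast at h1
  rw [div_self hK.ne'] at h1
  have h2 := aux_fact d
  rw [Nat.factorial_succ] at h2
  push_cast at h2
  rw [Real.log_mul (by positivity) (by positivity)] at h2
  have h3 : Real.log (c + 1) ≤ entH c := by
    unfold entH
    rcases hc.eq_or_lt with h0 | h0
    · subst h0; simp
    · have := mul_le_mul_of_nonneg_left (Real.log_le_log h0 (by linarith : c ≤ c + 1)) hc
      linarith
  have h4 : entH c * (d + 1) = (d + 1) * ((c + 1) * Real.log (c + 1) - c * Real.log c) := by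
    unfold entH; ring
  have h5 : (d : ℝ) * entH c - 1 - Real.log ((d : ℝ) + 1) ≤
      Real.log (pD d (((d : ℝ) + 1) * c)) := by
    rw [hlog]; linarith
  have h6 : 0 ≤ Real.log ((d : ℝ) + 1) := Real.log_nonneg (by linarith [(Nat.cast_nonneg d : (0:ℝ) ≤ d)])
  rw [div_le_iff₀ (by positivity)]
  rw [← Real.exp_log hppos]
  have h7 : ((d : ℝ) + 1) ^ 2 = Real.exp (2 * Real.log ((d : ℝ) + 1)) := by
    rw [two_mul, Real.exp_add, Real.exp_log hK]; ring
  rw [h7, ← Real.exp_add, ← Real.exp_add]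
  exact Real.exp_le_exp.mpr (by linarith)

lemma pD_nonneg (d : ℕ) (x : ℝ) (hx : -1 ≤ x) : 0 ≤ pD d x := by
  unfold pD
  exact Finset.prod_nonneg fun j _ => div_nonneg
    (by linarith [(Nat.cast_nonneg j : (0:ℝ) ≤ j)]) (by positivity)

lemma pD_succ (d : ℕ) (x : ℝ) :
    pD (d + 1) x = pD d x * ((x + (d : ℝ) + 1) / ((d : ℝ) + 1)) := by
  unfold pD; rw [Finset.prod_range_succ]

lemma pD_mono (d : ℕ) (x y : ℝ) (hx : -1 ≤ x) (hxy : x ≤ y) : pD d x ≤ pD d y := by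
  unfold pD
  apply Finset.prod_le_prod
  · intro j _
    exact div_nonneg (by linarith [(Nat.cast_nonneg j : (0:ℝ) ≤ j)]) (by positivity)
  · intro j _
    gcongr

lemma pD_nat (d y : ℕ) : pD d (y : ℝ) = ((y + d).choose d : ℝ) := by
  induction d with
  | zero => simp [pD]
  | succ d ih =>
    rw [pD_succ, ih]
    have h := Nat.add_one_mul_choose_eq (y + d) d
    have h' : ((y + d + 1 : ℕ) : ℝ) * ((y + d).choose d : ℝ) =
      ((y + d + 1).choose (d + 1) : ℝ) * ((d + 1 : ℕ) : ℝ) := by exact_mod_cast h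
    push_cast at h'
    rw [← add_assoc, ← mul_div_assoc, div_eq_iff (by positivity), ← h']
    ring

/-- Supporting line for `pD` on `[-1, ∞)`. -/
lemma pD_support (d : ℕ) (a : ℝ) (ha : 0 ≤ a) :
    ∃ m : ℝ, 0 ≤ m ∧ ∀ y : ℝ, -1 ≤ y → pD d a + m * (y - a) ≤ pD d y := by
  induction d with
  | zero => exact ⟨0, le_rfl, fun y _ => by simp [pD]⟩
  | succ d ih =>
    obtain ⟨m, hm, h⟩ := ih
    have hp := pD_nonneg d a (by linarith)
    refine ⟨(m * (a + d + 1) + pD d a) / ((d : ℝ) + 1), by positivity, fun y hy => ?_⟩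
    have h1 := h y hy
    have h2 : 0 ≤ (pD d y - pD d a) * (y - a) := by
      rcases le_total y a with hya | hya
      · exact mul_nonneg_of_nonpos_of_nonpos (by linarith [pD_mono d y a hy hya]) (by linarith)
      · exact mul_nonneg (by linarith [pD_mono d a y (by linarith) hya]) (by linarith)
    have h3 : (m * (y - a)) * (a + d + 1) ≤ (pD d y - pD d a) * (a + d + 1) :=
      mul_le_mul_of_nonneg_right (by linarith) (by positivity)
    rw [pD_succ, pD_succ]
    have hK : (0 : ℝ) < (d : ℝ) + 1 := by positivity
    rw [← sub_nonneg]
    have e : pD d y * ((y + (d : ℝ) + 1) / ((d : ℝ) + 1)) -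
        (pD d a * ((a + (d : ℝ) + 1) / ((d : ℝ) + 1)) +
          (m * (a + d + 1) + pD d a) / ((d : ℝ) + 1) * (y - a)) =
        ((pD d y - pD d a) * (y - a) + ((pD d y - pD d a) * (a + d + 1) -
          (m * (y - a)) * (a + d + 1))) / ((d : ℝ) + 1) := by
      field_simp; ring
    rw [e]
    exact div_nonneg (by linarith) hK.le

/-- The truncated binomial weight at an integer. -/
def phiD (d : ℕ) (y : ℤ) : ℝ := if 0 ≤ y then ((y.toNat + d).choose d : ℝ) else 0

lemma phiD_support (d : ℕ) (hd : 1 ≤ d) (a : ℝ) (ha : 0 ≤ a) :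
    ∃ m : ℝ, ∀ y : ℤ, pD d a + m * ((y : ℝ) - a) ≤ phiD d y := by
  obtain ⟨m, hm, h⟩ := pD_support d a ha
  refine ⟨m, fun y => ?_⟩
  unfold phiD
  split_ifs with hy
  · lift y to ℕ using hy
    have := h y (by linarith [(Nat.cast_nonneg y : (0:ℝ) ≤ y)])
    rw [pD_nat] at this
    simpa using this
  · have h1 := h (-1) le_rfl
    have h0 : pD d (-1) = 0 := by
      unfold pD
      exact Finset.prod_eq_zero (i := 0) (Finset.mem_range.2 hd) (by simp)
    have hy' : (y : ℝ) ≤ -1 := by exact_mod_cast (by omega : y ≤ -1)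
    have := mul_le_mul_of_nonneg_left (sub_le_sub_right hy' a) hm
    linarith

lemma sum_one (d g : ℕ) :
    ∑ x ∈ Finset.range (g + 1), (((g - x + d).choose d : ℕ) : ℝ) =
      ((g + d + 1).choose (d + 1) : ℝ) := by
  induction g with
  | zero => simp
  | succ g ih =>
    rw [Finset.sum_range_succ']
    have : ∀ x ∈ Finset.range (g + 1), (((g + 1 - (x + 1) + d).choose d : ℕ) : ℝ) =
        (((g - x + d).choose d : ℕ) : ℝ) := by
      intro x _; rw [Nat.add_sub_add_right]
    rw [Finset.sum_congr rfl this, ih, Nat.sub_zero]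
    have h := Nat.choose_succ_succ (g + 1 + d) d
    have e : g + d + 1 = g + 1 + d := by ring
    rw [e]
    rw [show (g + 1 + d + 1).choose (d + 1) = _ from h]
    push_cast
    simp only [Nat.succ_eq_add_one]
    ring

lemma sum_two (d g : ℕ) :
    ∑ x ∈ Finset.range (g + 1), (x : ℝ) * (((g - x + d).choose d : ℕ) : ℝ) =
      (g : ℝ) / ((d : ℝ) + 2) * ((g + d + 1).choose (d + 1) : ℝ) := by
  induction g with
  | zero => simp
  | succ g ih =>
    rw [Finset.sum_range_succ']
    have : ∀ x ∈ Finset.range (g + 1),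
        ((x + 1 : ℕ) : ℝ) * (((g + 1 - (x + 1) + d).choose d : ℕ) : ℝ) =
        (x : ℝ) * (((g - x + d).choose d : ℕ) : ℝ) + (((g - x + d).choose d : ℕ) : ℝ) := by
      intro x _; rw [Nat.add_sub_add_right]; push_cast; ring
    rw [Finset.sum_congr rfl this, Finset.sum_add_distrib, ih, sum_one]
    have h := Nat.choose_mul_succ_eq (g + d + 1) (d + 1)
    have e : g + d + 1 + 1 - (d + 1) = g + 1 := by omega
    rw [e] at h
    have h' : ((g + d + 1).choose (d + 1) : ℝ) * ((g : ℝ) + d + 1 + 1) =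
      ((g + 1 + d + 1).choose (d + 1) : ℝ) * ((g : ℝ) + 1) := by
      rw [show g + 1 + d + 1 = g + d + 1 + 1 by ring]
      exact_mod_cast h
    push_cast
    field_simp
    linarith

lemma moment_zero {ι : Type*} [Fintype ι] [DecidableEq ι] (d : ℕ) (g : ι → ℕ) :
    ∑ f ∈ Fintype.piFinset (fun i => Finset.range (g i + 1)),
      ∏ i, (((g i - f i + d).choose d : ℕ) : ℝ) =
      ∏ i, ((g i + d + 1).choose (d + 1) : ℝ) := by
  rw [← Finset.prod_univ_sum (fun i => Finset.range (g i + 1))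
    (fun i x => (((g i - x + d).choose d : ℕ) : ℝ))]
  exact Finset.prod_congr rfl fun i _ => sum_one d (g i)

lemma moment_one {ι : Type*} [Fintype ι] [DecidableEq ι] (d : ℕ) (g : ι → ℕ) :
    ∑ f ∈ Fintype.piFinset (fun i => Finset.range (g i + 1)),
      (∑ j, (f j : ℝ)) * ∏ i, (((g i - f i + d).choose d : ℕ) : ℝ) =
      (∑ j, (g j : ℝ)) / ((d : ℝ) + 2) * ∏ i, ((g i + d + 1).choose (d + 1) : ℝ) := by
  simp_rw [Finset.sum_mul]
  rw [Finset.sum_comm, Finset.sum_div, Finset.sum_mul]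
  refine Finset.sum_congr rfl fun j _ => ?_
  have h : ∀ f : ι → ℕ, (f j : ℝ) * ∏ i, (((g i - f i + d).choose d : ℕ) : ℝ) =
      ∏ i, ((if i = j then (f i : ℝ) else 1) * (((g i - f i + d).choose d : ℕ) : ℝ)) := by
    intro f
    rw [Finset.prod_mul_distrib, Finset.prod_ite_eq']
    simp
  simp_rw [h]
  rw [← Finset.prod_univ_sum (fun i => Finset.range (g i + 1))
    (fun i x => (if i = j then (x : ℝ) else 1) * (((g i - x + d).choose d : ℕ) : ℝ))]
  have h2 : ∀ i, ∑ x ∈ Finset.range (g i + 1),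
      (if i = j then (x : ℝ) else 1) * (((g i - x + d).choose d : ℕ) : ℝ) =
      (if i = j then (g i : ℝ) / ((d : ℝ) + 2) else 1) * ((g i + d + 1).choose (d + 1) : ℝ) := by
    intro i
    split_ifs with hij
    · exact sum_two d (g i)
    · simpa using sum_one d (g i)
  simp_rw [h2]
  rw [Finset.prod_mul_distrib, Finset.prod_ite_eq']
  simp

lemma step_pos {ι : Type*} [Fintype ι] [DecidableEq ι] (d : ℕ) (hd : 1 ≤ d) (g : ι → ℕ) (N : ℤ)
    (a : ℝ) (ha : 0 ≤ a) (haN : a = N + (∑ j, (g j : ℝ)) / ((d : ℝ) + 2)) :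
    pD d a * ∏ i, ((g i + d + 1).choose (d + 1) : ℝ) ≤
    ∑ f ∈ Fintype.piFinset (fun i => Finset.range (g i + 1)),
      phiD d (N + ∑ j, (f j : ℤ)) * ∏ i, (((g i - f i + d).choose d : ℕ) : ℝ) := by
  obtain ⟨m, hm⟩ := phiD_support d hd a ha
  have h1 : ∑ f ∈ Fintype.piFinset (fun i => Finset.range (g i + 1)),
      (pD d a + m * (((N + ∑ j, (f j : ℤ) : ℤ) : ℝ) - a)) *
        ∏ i, (((g i - f i + d).choose d : ℕ) : ℝ) ≤ _ :=
    Finset.sum_le_sum fun f _ => mul_le_mul_of_nonneg_right (hm (N + ∑ j, (f j : ℤ)))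
      (Finset.prod_nonneg fun i _ => Nat.cast_nonneg _)
  refine le_trans (le_of_eq ?_) h1
  have h2 : ∀ f : ι → ℕ, (pD d a + m * (((N + ∑ j, (f j : ℤ) : ℤ) : ℝ) - a)) *
        ∏ i, (((g i - f i + d).choose d : ℕ) : ℝ) =
      (pD d a + m * (N - a)) * ∏ i, (((g i - f i + d).choose d : ℕ) : ℝ) +
      m * ((∑ j, (f j : ℝ)) * ∏ i, (((g i - f i + d).choose d : ℕ) : ℝ)) := by
    intro f; push_cast; ring
  simp_rw [h2]
  rw [Finset.sum_add_distrib, ← Finset.mul_sum, ← Finset.mul_sum, moment_zero, moment_one]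
  rw [haN]
  ring

lemma step_zero {ι : Type*} [Fintype ι] [DecidableEq ι] (g : ι → ℕ) (N : ℤ) (hN : -1 ≤ N)
    (a : ℝ) (ha : 0 ≤ a) (haN : a = N + (∑ j, (g j : ℝ)) / 2) :
    (1 / Real.exp 1) * ∏ i, ((g i + 1 : ℕ) : ℝ) ≤
    ∑ f ∈ Fintype.piFinset (fun i => Finset.range (g i + 1)),
      phiD 0 (N + ∑ j, (f j : ℤ)) := by
  have he : 1 / Real.exp 1 ≤ 1 / 2 := by
    have := Real.add_one_le_exp (1 : ℝ)
    exact one_div_le_one_div_of_le (by norm_num) (by linarith)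
  have hcard : ∏ i, ((g i + 1 : ℕ) : ℝ) =
      ∑ f ∈ Fintype.piFinset (fun i => Finset.range (g i + 1)), (1 : ℝ) := by
    rw [Finset.sum_const, Fintype.card_piFinset]
    simp
  have hle : (1 / Real.exp 1) * ∏ i, ((g i + 1 : ℕ) : ℝ) ≤ 1 / 2 * ∏ i, ((g i + 1 : ℕ) : ℝ) :=
    mul_le_mul_of_nonneg_right he (Finset.prod_nonneg fun i _ => Nat.cast_nonneg _)
  refine hle.trans ?_
  rcases (by omega : 0 ≤ N ∨ N = -1) with h | h
  · have : ∀ f ∈ Fintype.piFinset (fun i => Finset.range (g i + 1)),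
        phiD 0 (N + ∑ j, (f j : ℤ)) = 1 := by
      intro f _
      unfold phiD
      rw [if_pos (add_nonneg h (Finset.sum_nonneg fun j _ => Int.natCast_nonneg _))]
      simp
    rw [Finset.sum_congr rfl this, ← hcard]
    have : 0 ≤ ∏ i, ((g i + 1 : ℕ) : ℝ) := Finset.prod_nonneg fun i _ => Nat.cast_nonneg _
    linarith
  · subst h
    have hpt : ∀ f ∈ Fintype.piFinset (fun i => Finset.range (g i + 1)),
        (1 : ℝ) - (if f = 0 then 1 else 0) ≤ phiD 0 (-1 + ∑ j, (f j : ℤ)) := by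
      intro f _
      unfold phiD
      by_cases hf : f = 0
      · simp [hf]
      · have : 0 < ∑ j, (f j : ℤ) := by
          obtain ⟨j, hj⟩ := Function.ne_iff.1 hf
          have hj' : 0 < f j := Nat.pos_of_ne_zero hj
          exact Finset.sum_pos' (fun i _ => Int.natCast_nonneg _) ⟨j, Finset.mem_univ _, by exact_mod_cast hj'⟩
        rw [if_neg hf, if_pos (by omega)]
        simp
    refine le_trans ?_ (Finset.sum_le_sum hpt)
    rw [Finset.sum_sub_distrib, ← hcard, Finset.sum_ite_eq', if_pos (by simp [Fintype.mem_piFinset])]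
    have h2 : (2 : ℝ) ≤ ∏ i, ((g i + 1 : ℕ) : ℝ) := by
      have hg : ∃ j, g j ≠ 0 := by
        by_contra hcon
        push Not at hcon
        simp [hcon] at haN
        linarith
      obtain ⟨j, hj⟩ := hg
      have h3 : g j + 1 ∣ ∏ i, (g i + 1) := Finset.dvd_prod_of_mem _ (Finset.mem_univ j)
      have h4 : 0 < ∏ i, (g i + 1) := Finset.prod_pos fun i _ => Nat.succ_pos _
      have h5 := Nat.le_of_dvd h4 h3
      have h6 : 2 ≤ ∏ i, (g i + 1) := by omega
      exact_mod_cast h6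
    linarith

lemma step_all {ι : Type*} [Fintype ι] [DecidableEq ι] (d : ℕ) (g : ι → ℕ) (N : ℤ)
    (hN : d = 0 → -1 ≤ N) (c : ℝ) (hc : 0 ≤ c)
    (hcN : ((d : ℝ) + 1) * c = N + (∑ j, (g j : ℝ)) / ((d : ℝ) + 2)) :
    ((c + 1) ^ (c + 1) / c ^ c) ^ d / (Real.exp 1 * ((d : ℝ) + 1) ^ 2) *
      ∏ i, ((g i + d + 1).choose (d + 1) : ℝ) ≤
    ∑ f ∈ Fintype.piFinset (fun i => Finset.range (g i + 1)),
      phiD d (N + ∑ j, (f j : ℤ)) * ∏ i, (((g i - f i + d).choose d : ℕ) : ℝ) := by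
  rcases Nat.eq_zero_or_pos d with h | h
  · subst h
    have := step_zero g N (hN rfl) _ hc (by simpa using hcN)
    simpa using this
  · exact le_trans (mul_le_mul_of_nonneg_right (pD_lower d c hc)
      (Finset.prod_nonneg fun i _ => Nat.cast_nonneg _))
      (step_pos d h g N _ (by positivity) hcN)

/-- Flows of the first `t` vertices, all later vertices being merged into the last one. -/
structure PreFlow (n : ℕ) (N : Fin (n + 1) → ℤ) (t : ℕ)
    (F : Fin (n + 1) → Fin (n + 1) → ℕ) : Prop where
  up : ∀ i j : Fin (n + 1), ¬ i < j → F i j = 0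
  row : ∀ i j : Fin (n + 1), t ≤ (i : ℕ) → F i j = 0
  col : ∀ i j : Fin (n + 1), t ≤ (j : ℕ) → j ≠ Fin.last n → F i j = 0
  net : ∀ i : Fin (n + 1), (i : ℕ) < t → (∑ j, (F i j : ℤ)) - ∑ k, (F k i : ℤ) = N i
  tot : ∑ i, (F i (Fin.last n) : ℤ) = ∑ i : Fin (n + 1), if (i : ℕ) < t then N i else 0

/-- Split off vertex `τ` from the merged sink. -/
def extF (n : ℕ) (N : Fin (n + 1) → ℤ) (τ : Fin (n + 1))
    (p : (_ : Fin (n + 1) → Fin (n + 1) → ℕ) × (Fin (n + 1) → ℕ)) :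
    Fin (n + 1) → Fin (n + 1) → ℕ :=
  fun i j => if j = Fin.last n then
      (if i = τ then (N τ + ∑ k, (p.2 k : ℤ)).toNat else p.1 i (Fin.last n) - p.2 i)
    else if j = τ then p.2 i else p.1 i j

lemma extF_valid (n : ℕ) (N : Fin (n + 1) → ℤ) (τ : Fin (n + 1)) (hτ : τ ≠ Fin.last n)
    (F : Fin (n + 1) → Fin (n + 1) → ℕ) (hF : PreFlow n N τ F) (f : Fin (n + 1) → ℕ)
    (hf : ∀ i, f i ≤ F i (Fin.last n)) (hy : 0 ≤ N τ + ∑ k, (f k : ℤ)) :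
    PreFlow n N (τ + 1) (extF n N τ ⟨F, f⟩) := by
  have hτl : (τ : ℕ) < n := by
    have := Fin.lt_last_iff_ne_last.2 hτ
    simpa [Fin.lt_def] using this
  have hf0 : ∀ i : Fin (n + 1), (τ : ℕ) ≤ i → f i = 0 := by
    intro i hi
    have := hf i
    rw [hF.row i _ hi] at this
    omega
  constructor
  · intro i j hij
    unfold extF
    split_ifs with h1 h2 h3
    · subst h2; subst h1
      exact absurd (Fin.lt_last_iff_ne_last.2 hτ) hij
    · subst h1
      simp [hF.up i _ hij]
    · subst h3
      exact hf0 i (by simpa using hij)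
    · exact hF.up i j hij
  · intro i j hi
    have hne : i ≠ τ := by rintro rfl; omega
    unfold extF
    simp only [hne, if_false]
    rw [hF.row i _ (by omega), hF.row i _ (by omega), hf0 i (by omega)]
    simp
  · intro i j hj hjl
    have hne : j ≠ τ := by rintro rfl; omega
    unfold extF
    simp only [hne, hjl, if_false]
    exact hF.col i j (by omega) hjl
  · intro i hi
    have hil : i ≠ Fin.last n := by rintro rfl; simp at hi; omega
    by_cases hiτ : i = τ
    · subst hiτ
      have h1 : ∀ j, ((extF n N i ⟨F, f⟩ i j : ℕ) : ℤ) =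
          if j = Fin.last n then N i + ∑ k, (f k : ℤ) else 0 := by
        intro j
        unfold extF
        split_ifs with a b
        · simpa using hy
        · exact absurd rfl b
        · simp [hf0 i le_rfl]
        · simp [hF.row i j le_rfl]
      have h2 : ∀ k, ((extF n N i ⟨F, f⟩ k i : ℕ) : ℤ) = f k := by
        intro k; unfold extF; simp [hil]
      simp_rw [h1, h2]
      simp
    · have hlt : (i : ℕ) < τ := by
        have : (i : ℕ) ≠ τ := fun h => hiτ (Fin.ext h)
        omega
      rw [← hF.net i hlt]
      have h1 : ∀ j, ((extF n N τ ⟨F, f⟩ i j : ℕ) : ℤ) =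
          F i j - (if j = Fin.last n then (f i : ℤ) else 0) + (if j = τ then (f i : ℤ) else 0) := by
        intro j
        unfold extF
        by_cases a : j = Fin.last n
        · subst a
          simp [hiτ, hτ.symm, Nat.cast_sub (hf i)]
        · by_cases b : j = τ
          · subst b
            simp [a, hF.col i j le_rfl a]
          · simp [a, b]
      have h2 : ∀ k, ((extF n N τ ⟨F, f⟩ k i : ℕ) : ℤ) = F k i := by
        intro k; unfold extF; simp [hil, hiτ]
      simp_rw [h1, h2]
      rw [Finset.sum_add_distrib, Finset.sum_sub_distrib]
      simp
  · have h1 : ∀ i, ((extF n N τ ⟨F, f⟩ i (Fin.last n) : ℕ) : ℤ) =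
        (F i (Fin.last n) : ℤ) - f i + (if i = τ then N τ + ∑ k, (f k : ℤ) else 0) := by
      intro i
      unfold extF
      by_cases h : i = τ
      · subst h
        simp [hF.row i _ le_rfl, hf0 i le_rfl, hy]
      · simp [h, Nat.cast_sub (hf i)]
    simp_rw [h1]
    rw [Finset.sum_add_distrib, Finset.sum_sub_distrib, hF.tot]
    have h2 : ∀ i : Fin (n + 1), (if (i : ℕ) < (τ : ℕ) + 1 then N i else 0) =
        (if (i : ℕ) < (τ : ℕ) then N i else 0) + (if i = τ then N τ else 0) := by
      intro i
      by_cases h : i = τ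
      · subst h; simp
      · have : (i : ℕ) ≠ τ := fun h' => h (Fin.ext h')
        have e : ((i : ℕ) < (τ : ℕ) + 1) ↔ (i : ℕ) < τ := by omega
        simp [h, e]
    simp_rw [h2]
    rw [Finset.sum_add_distrib]
    simp

lemma extF_inj (n : ℕ) (N : Fin (n + 1) → ℤ) (τ : Fin (n + 1)) (hτ : τ ≠ Fin.last n)
    (F F' : Fin (n + 1) → Fin (n + 1) → ℕ) (hF : PreFlow n N τ F) (hF' : PreFlow n N τ F')
    (f f' : Fin (n + 1) → ℕ)
    (hf : ∀ i, f i ≤ F i (Fin.last n)) (hf' : ∀ i, f' i ≤ F' i (Fin.last n))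
    (h : extF n N τ ⟨F, f⟩ = extF n N τ ⟨F', f'⟩) : F = F' ∧ f = f' := by
  have hff : f = f' := by
    funext i
    have := congrFun (congrFun h i) τ
    simpa [extF, hτ] using this
  refine ⟨?_, hff⟩
  subst hff
  funext i j
  by_cases a : j = Fin.last n
  · subst a
    by_cases b : i = τ
    · subst b
      rw [hF.row i _ le_rfl, hF'.row i _ le_rfl]
    · have := congrFun (congrFun h i) (Fin.last n)
      simp [extF, b] at this
      have h1 := hf i
      have h2 := hf' i
      omega
  · by_cases b : j = τ
    · subst b
      rw [hF.col i j le_rfl a, hF'.col i j le_rfl a]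
    · have := congrFun (congrFun h i) j
      simpa [extF, a, b] using this

lemma extF_weight (n : ℕ) (N : Fin (n + 1) → ℤ) (τ : Fin (n + 1)) (d : ℕ)
    (F : Fin (n + 1) → Fin (n + 1) → ℕ) (hF : PreFlow n N τ F)
    (f : Fin (n + 1) → ℕ) (hy : 0 ≤ N τ + ∑ k, (f k : ℤ)) :
    ∏ i, (((extF n N τ ⟨F, f⟩ i (Fin.last n) + d).choose d : ℕ) : ℝ) =
      phiD d (N τ + ∑ k, (f k : ℤ)) *
        ∏ i, (((F i (Fin.last n) - f i + d).choose d : ℕ) : ℝ) := by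
  have h1 : ∀ i, (((extF n N τ ⟨F, f⟩ i (Fin.last n) + d).choose d : ℕ) : ℝ) =
      (if i = τ then phiD d (N τ + ∑ k, (f k : ℤ)) else 1) *
        (((F i (Fin.last n) - f i + d).choose d : ℕ) : ℝ) := by
    intro i
    unfold extF phiD
    by_cases h : i = τ
    · subst h
      simp [hF.row i _ le_rfl, hy]
    · simp [h]
  simp_rw [h1]
  rw [Finset.prod_mul_distrib, Finset.prod_ite_eq']
  simp

/-- The factor contributed by the vertex `n - k`. -/
noncomputable def rK (n : ℕ) (N : Fin (n + 1) → ℤ) (k : ℕ) : ℝ :=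
  ((cAvg n N k + 1) ^ (cAvg n N k + 1) / cAvg n N k ^ cAvg n N k) ^ (k - 1) /
    (Real.exp 1 * (k : ℝ) ^ 2)

lemma sPartial_eq (n : ℕ) (N : Fin (n + 1) → ℤ) (τ : Fin (n + 1)) :
    sPartial n N τ = (∑ i : Fin (n + 1), if (i : ℕ) < τ then N i else 0) + N τ := by
  unfold sPartial
  have h2 : ∀ i : Fin (n + 1), (if (i : ℕ) ≤ (τ : ℕ) then N i else 0) =
      (if (i : ℕ) < (τ : ℕ) then N i else 0) + (if i = τ then N τ else 0) := by
    intro i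
    by_cases h : i = τ
    · subst h; simp
    · have : (i : ℕ) ≠ τ := fun h' => h (Fin.ext h')
      have e : ((i : ℕ) ≤ (τ : ℕ)) ↔ (i : ℕ) < τ := by omega
      simp [h, e]
  simp_rw [h2]
  rw [Finset.sum_add_distrib]
  simp

lemma cAvg_eq (n : ℕ) (N : Fin (n + 1) → ℤ) (τ : Fin (n + 1)) (d : ℕ) (hd : (τ : ℕ) + d + 1 = n) :
    cAvg n N (d + 1) = (N τ : ℝ) / ((d : ℝ) + 2) +
      ((sPartial n N τ : ℤ) : ℝ) / (((d : ℝ) + 1) * ((d : ℝ) + 2)) := by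
  unfold cAvg
  have h1 : n - (d + 1) = (τ : ℕ) := by omega
  rw [h1]
  have h2 : ∀ m : Fin (n + 1), (if (m : ℕ) = (τ : ℕ) then (N m : ℝ) else 0) =
      if m = τ then (N m : ℝ) else 0 := by
    intro m; simp [Fin.ext_iff]
  simp_rw [h2]
  rw [Finset.sum_ite_eq']
  push_cast
  simp
  ring_nf

lemma main_step (n : ℕ) (N : Fin (n + 1) → ℤ) (τ : Fin (n + 1)) (d : ℕ)
    (hd : (τ : ℕ) + d + 1 = n)
    (hN : d = 0 → -1 ≤ N τ) (hc : 0 ≤ cAvg n N (d + 1))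
    (S : Finset (Fin (n + 1) → Fin (n + 1) → ℕ)) (hS : ∀ F ∈ S, PreFlow n N τ F) :
    ∃ S' : Finset (Fin (n + 1) → Fin (n + 1) → ℕ), (∀ F ∈ S', PreFlow n N (τ + 1) F) ∧
      rK n N (d + 1) * ∑ F ∈ S, ∏ i, (((F i (Fin.last n) + d + 1).choose (d + 1) : ℕ) : ℝ) ≤
      ∑ F ∈ S', ∏ i, (((F i (Fin.last n) + d).choose d : ℕ) : ℝ) := by
  classical
  have hτ : τ ≠ Fin.last n := by rintro rfl; simp at hd; omega
  let P : (Fin (n + 1) → Fin (n + 1) → ℕ) → Finset (Fin (n + 1) → ℕ) := fun F =>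
    (Fintype.piFinset (fun i => Finset.range (F i (Fin.last n) + 1))).filter
      (fun f => 0 ≤ N τ + ∑ k, (f k : ℤ))
  have hP : ∀ F f, f ∈ P F → (∀ i, f i ≤ F i (Fin.last n)) ∧ 0 ≤ N τ + ∑ k, (f k : ℤ) := by
    intro F f hf
    simp only [P, Finset.mem_filter, Fintype.mem_piFinset, Finset.mem_range] at hf
    exact ⟨fun i => by have := hf.1 i; omega, hf.2⟩
  refine ⟨(S.sigma P).image (extF n N τ), ?_, ?_⟩
  · intro G hG
    obtain ⟨⟨F, f⟩, hp, rfl⟩ := Finset.mem_image.1 hG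
    obtain ⟨h1, h2⟩ := Finset.mem_sigma.1 hp
    exact extF_valid n N τ hτ F (hS F h1) f (hP F f h2).1 (hP F f h2).2
  · rw [Finset.sum_image, Finset.sum_sigma, Finset.mul_sum]
    · refine Finset.sum_le_sum fun F hF => ?_
      have hv := hS F hF
      have e : ∑ f ∈ P F, ∏ i, (((extF n N τ ⟨F, f⟩ i (Fin.last n) + d).choose d : ℕ) : ℝ) =
          ∑ f ∈ Fintype.piFinset (fun i => Finset.range (F i (Fin.last n) + 1)),
            phiD d (N τ + ∑ j, (f j : ℤ)) *
              ∏ i, (((F i (Fin.last n) - f i + d).choose d : ℕ) : ℝ) := by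
        rw [Finset.sum_congr rfl fun f hf => extF_weight n N τ d F hv f (hP F f hf).2]
        simp only [P]
        rw [Finset.sum_filter]
        refine Finset.sum_congr rfl fun f _ => ?_
        split_ifs with h
        · rfl
        · simp [phiD, h]
      rw [e]
      have key := step_all d (fun i => F i (Fin.last n)) (N τ) hN (cAvg n N (d + 1)) hc ?_
      · unfold rK
        push_cast
        exact key
      · have ht : (∑ j, (F j (Fin.last n) : ℝ)) =
            ((∑ i : Fin (n + 1), if (i : ℕ) < τ then N i else 0 : ℤ) : ℝ) := by
          rw [← hv.tot]; push_cast; rfl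
        rw [ht, cAvg_eq n N τ d hd, sPartial_eq]
        push_cast
        field_simp
        ring
    · rintro ⟨F, f⟩ hp ⟨F', f'⟩ hp' h
      obtain ⟨h1, h2⟩ := Finset.mem_sigma.1 hp
      obtain ⟨h1', h2'⟩ := Finset.mem_sigma.1 hp'
      obtain ⟨rfl, rfl⟩ := extF_inj n N τ hτ F F' (hS F h1) (hS F' h1') f f'
        (hP F f h2).1 (hP F' f' h2').1 h
      rfl

lemma rK_nonneg (n : ℕ) (N : Fin (n + 1) → ℤ) (k : ℕ) (hc : 0 ≤ cAvg n N k) :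
    0 ≤ rK n N k := by
  unfold rK
  rw [aux_R _ hc]
  positivity

lemma main_ind (n : ℕ) (N : Fin (n + 1) → ℤ)
    (hN : ∀ τ : Fin (n + 1), (τ : ℕ) + 1 = n → -1 ≤ N τ)
    (hc : ∀ k, 1 ≤ k → k ≤ n → 0 ≤ cAvg n N k) (t : ℕ) (ht : t ≤ n) :
    ∃ S : Finset (Fin (n + 1) → Fin (n + 1) → ℕ), (∀ F ∈ S, PreFlow n N t F) ∧
      ∏ u ∈ Finset.range t, rK n N (n - u) ≤
      ∑ F ∈ S, ∏ i, (((F i (Fin.last n) + (n - t)).choose (n - t) : ℕ) : ℝ) := by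
  induction t with
  | zero =>
    refine ⟨{0}, ?_, by simp⟩
    intro F hF
    rw [Finset.mem_singleton] at hF
    subst hF
    constructor <;> simp
  | succ t ih =>
    obtain ⟨S, hS, h⟩ := ih (by omega)
    obtain ⟨d, hd⟩ : ∃ d, t + d + 1 = n := ⟨n - t - 1, by omega⟩
    obtain ⟨S', hS', h'⟩ := main_step n N ⟨t, by omega⟩ d hd
      (fun h0 => hN _ (by simp; omega)) (hc _ (by omega) (by omega)) S hS
    refine ⟨S', hS', ?_⟩
    have e1 : n - t = d + 1 := by omega
    have e2 : n - (t + 1) = d := by omega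
    rw [e1] at h
    rw [Finset.prod_range_succ, e1, e2, mul_comm]
    refine le_trans ?_ h'
    exact mul_le_mul_of_nonneg_left h (rK_nonneg n N _ (hc _ (by omega) (by omega)))

lemma flow_finite (n : ℕ) (N : Fin (n + 1) → ℤ) :
    Finite {f : Fin (n + 1) → Fin (n + 1) → ℕ // IsIntFlow n N f} := by
  classical
  set M : ℤ := -∑ i : Fin (n + 1), (i : ℤ) * N i with hM
  have hb : ∀ f, IsIntFlow n N f → ∀ i j, f i j ≤ M.toNat := by
    intro f hf i j
    by_cases hij : i < j
    swap
    · rw [hf.1 i j hij]; exact Nat.zero_le _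
    have e : M = ∑ a : Fin (n + 1), ∑ b : Fin (n + 1),
        if a < b then ((b : ℤ) - a) * (f a b : ℤ) else 0 := by
      rw [hM]
      have h1 : ∀ a : Fin (n + 1), ((a : ℕ) : ℤ) * N a =
          (∑ b, if a < b then (a : ℤ) * (f a b : ℤ) else 0) -
          ∑ b, if b < a then (a : ℤ) * (f b a : ℤ) else 0 := by
        intro a
        rw [← hf.2 a, mul_sub, Finset.mul_sum, Finset.mul_sum]
        simp only [mul_ite, mul_zero]
      simp_rw [h1]
      rw [Finset.sum_sub_distrib]
      rw [Finset.sum_comm (f := fun a b : Fin (n + 1) =>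
        if b < a then ((a : ℕ) : ℤ) * (f b a : ℤ) else 0)]
      rw [neg_sub, ← Finset.sum_sub_distrib]
      refine Finset.sum_congr rfl fun a _ => ?_
      rw [← Finset.sum_sub_distrib]
      refine Finset.sum_congr rfl fun b _ => ?_
      split_ifs <;> ring
    have hnn : ∀ a b : Fin (n + 1), 0 ≤ if a < b then ((b : ℤ) - a) * (f a b : ℤ) else 0 := by
      intro a b
      split_ifs with h
      · have : (a : ℕ) < b := h
        exact mul_nonneg (by omega) (by positivity)
      · exact le_rfl
    have h2 : (f i j : ℤ) ≤ M := by
      rw [e]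
      have h3 := Finset.single_le_sum (f := fun a : Fin (n + 1) => ∑ b : Fin (n + 1),
        if a < b then ((b : ℤ) - a) * (f a b : ℤ) else 0)
        (fun a _ => Finset.sum_nonneg fun b _ => hnn a b) (Finset.mem_univ i)
      have h4 := Finset.single_le_sum (f := fun b : Fin (n + 1) =>
        if i < b then ((b : ℤ) - i) * (f i b : ℤ) else 0)
        (fun b _ => hnn i b) (Finset.mem_univ j)
      simp only [hij, if_true] at h4
      have h5 : (i : ℕ) < j := hij
      have h6 : (f i j : ℤ) ≤ ((j : ℤ) - i) * (f i j : ℤ) := by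
        have : (1 : ℤ) ≤ (j : ℤ) - i := by omega
        nlinarith [Int.natCast_nonneg (f i j)]
      exact h6.trans (h4.trans h3)
    omega
  have hfin : ({f | ∀ i j, f i j ≤ M.toNat} : Set (Fin (n + 1) → Fin (n + 1) → ℕ)).Finite := by
    refine (Set.finite_Iic (fun _ _ => M.toNat : Fin (n + 1) → Fin (n + 1) → ℕ)).subset ?_
    intro f hf i j
    exact hf i j
  exact (hfin.subset (fun f hf => hb f hf) :
    ({f | IsIntFlow n N f} : Set (Fin (n + 1) → Fin (n + 1) → ℕ)).Finite).to_subtype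

lemma preflow_flow (n : ℕ) (N : Fin (n + 1) → ℤ) (hsum : ∑ i, N i = 0)
    (F : Fin (n + 1) → Fin (n + 1) → ℕ) (hF : PreFlow n N n F) : IsIntFlow n N F := by
  refine ⟨hF.up, fun i => ?_⟩
  have h1 : ∀ j, (if i < j then (F i j : ℤ) else 0) = F i j := by
    intro j
    split_ifs with h
    · rfl
    · rw [hF.up i j h]; rfl
  have h2 : ∀ k, (if k < i then (F k i : ℤ) else 0) = F k i := by
    intro k
    split_ifs with h
    · rfl
    · rw [hF.up k i h]; rfl
  simp_rw [h1, h2]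
  by_cases hi : (i : ℕ) < n
  · exact hF.net i hi
  · have hil : i = Fin.last n := Fin.ext (by have := i.isLt; simp only [Fin.val_last]; omega)
    subst hil
    rw [hF.tot]
    have h3 : ∀ j, F (Fin.last n) j = 0 := fun j => hF.row _ j (by simp)
    simp only [h3]
    rw [Fin.sum_univ_castSucc] at hsum ⊢
    simp [Fin.sum_univ_castSucc] at hsum ⊢
    linarith

/-- **Theorem (general lower bound, part 2).** If `s_k ≥ max{0, −(n−k)·N_k}` and
`N_k ≥ 1/(n−k) − (n−k+1)` for all `0 ≤ k ≤ n−1`, then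
`K_n(N) ≥ (1/(n² e^n (n!)²)) · ∏_{k=1}^{n} ((c_k+1)^{c_k+1}/c_k^{c_k})^{k−1}`
(real powers, with the convention `0^0 = 1`). -/
theorem kostant_general_lower_bound_two (n : ℕ) (hn : 1 ≤ n) (N : Fin (n + 1) → ℤ)
    (hsum : ∑ i, N i = 0)
    (hs : ∀ k : Fin n,
      max 0 (-((n : ℤ) - (k : ℕ)) * N k.castSucc) ≤ sPartial n N k)
    (hN : ∀ k : Fin n,
      1 / ((n : ℝ) - (k : ℕ)) - ((n : ℝ) - (k : ℕ) + 1) ≤ (N k.castSucc : ℝ)) :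
    (1 / ((n : ℝ) ^ 2 * Real.exp n * (Nat.factorial n : ℝ) ^ 2)) *
      (∏ k ∈ Finset.Icc 1 n,
        ((cAvg n N k + 1) ^ (cAvg n N k + 1) / cAvg n N k ^ cAvg n N k) ^ (k - 1)) ≤
      (Kn n N : ℝ) := by
  have hNlast : ∀ τ : Fin (n + 1), (τ : ℕ) + 1 = n → -1 ≤ N τ := by
    intro τ hτ
    have h := hN ⟨τ, by omega⟩
    have e : (⟨τ, by omega⟩ : Fin n).castSucc = τ := Fin.ext rfl
    rw [e] at h
    have e2 : (n : ℝ) - ((τ : ℕ) : ℝ) = 1 := by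
      have : ((τ : ℕ) : ℝ) + 1 = n := by exact_mod_cast hτ
      linarith
    simp only [e2] at h
    norm_num at h
    exact_mod_cast h
  have hc : ∀ k, 1 ≤ k → k ≤ n → 0 ≤ cAvg n N k := by
    intro k hk hkn
    obtain ⟨d, rfl⟩ : ∃ d, k = d + 1 := ⟨k - 1, by omega⟩
    obtain ⟨t, ht⟩ : ∃ t, t + d + 1 = n := ⟨n - d - 1, by omega⟩
    rw [cAvg_eq n N ⟨t, by omega⟩ d ht]
    have h := le_trans (le_max_right _ _) (hs ⟨t, by omega⟩)
    have e : (⟨t, by omega⟩ : Fin n).castSucc = (⟨t, by omega⟩ : Fin (n + 1)) := Fin.ext rfl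
    rw [e] at h
    simp only at h ⊢
    have e2 : (n : ℤ) - (t : ℕ) = d + 1 := by omega
    rw [e2] at h
    have h' : -((d : ℝ) + 1) * (N ⟨t, by omega⟩ : ℝ) ≤ (sPartial n N t : ℝ) := by
      exact_mod_cast h
    have e3 : (N ⟨t, by omega⟩ : ℝ) / ((d : ℝ) + 2) +
        (sPartial n N t : ℝ) / (((d : ℝ) + 1) * ((d : ℝ) + 2)) =
        (((d : ℝ) + 1) * (N ⟨t, by omega⟩ : ℝ) + (sPartial n N t : ℝ)) /
          (((d : ℝ) + 1) * ((d : ℝ) + 2)) := by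
      field_simp
    rw [e3]
    exact div_nonneg (by linarith) (by positivity)
  obtain ⟨S, hS, h⟩ := main_ind n N hNlast hc n le_rfl
  simp only [Nat.sub_self, Nat.choose_zero_right, Nat.cast_one, Finset.prod_const_one,
    Finset.sum_const, nsmul_eq_mul, mul_one] at h
  have hcard : (S.card : ℝ) ≤ (Kn n N : ℝ) := by
    have := flow_finite n N
    have h1 : Nat.card S ≤ Kn n N :=
      Nat.card_le_card_of_injective
        (fun F : S => (⟨F.1, preflow_flow n N hsum F.1 (hS F.1 F.2)⟩ :
          {f : Fin (n + 1) → Fin (n + 1) → ℕ // IsIntFlow n N f}))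
        (fun a b hab => Subtype.ext (by simpa using hab))
    have h2 : Nat.card S = S.card := by simp
    rw [h2] at h1
    exact_mod_cast h1
  refine le_trans ?_ (h.trans hcard)
  have hprod : ∏ u ∈ Finset.range n, rK n N (n - u) = ∏ k ∈ Finset.Icc 1 n, rK n N k := by
    refine Finset.prod_bij' (fun u _ => n - u) (fun k _ => n - k) ?_ ?_ ?_ ?_ ?_
    all_goals (intro a ha; simp only [Finset.mem_range, Finset.mem_Icc] at *; try omega)
  rw [hprod]
  unfold rK
  rw [Finset.prod_div_distrib, Finset.prod_mul_distrib, Finset.prod_const, Finset.prod_pow]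
  have hf : ∏ k ∈ Finset.Icc 1 n, (k : ℝ) = (n.factorial : ℝ) := by
    clear * -
    induction n with
    | zero => simp
    | succ n ih =>
      rw [Finset.prod_Icc_succ_top (by omega), ih, Nat.factorial_succ]
      push_cast
      ring
  rw [hf, Nat.card_Icc, Nat.add_sub_cancel, ← Real.exp_nat_mul, mul_one]
  have hp : 0 ≤ ∏ k ∈ Finset.Icc 1 n,
      ((cAvg n N k + 1) ^ (cAvg n N k + 1) / cAvg n N k ^ cAvg n N k) ^ (k - 1) := by
    refine Finset.prod_nonneg fun k hk => ?_
    rw [Finset.mem_Icc] at hk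
    rw [aux_R _ (hc k hk.1 hk.2)]
    positivity
  rw [one_div_mul_eq_div]
  refine div_le_div_of_nonneg_left hp (by positivity) ?_
  have hn1 : (1 : ℝ) ≤ (n : ℝ) ^ 2 := one_le_pow₀ (by exact_mod_cast hn)
  rw [mul_assoc]
  exact le_mul_of_one_le_left (by positivity) hn1
end

section
/- There exists a constant C > 0 such that for all integers t ≥ 1 and n ≥ 1, log₂ K_n(t, 0, …, 0, −t) ≥ (n/2)·(log₂ t)² − C·n·(1 + log₂ t) − C·(1 + log₂ t)³, where log₂ denotes the base-2 logarithm. -/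
open Finset

namespace KCRY

/-- The netflow vector of the CRY case. -/
def cry (n t : ℕ) : Fin (n + 1) → ℤ := fun i =>
  if (i : ℕ) = 0 then (t : ℤ) else if (i : ℕ) = n then -(t : ℤ) else 0

lemma flow_bdd (n : ℕ) (N : Fin (n + 1) → ℤ) :
    ∀ m : ℕ, ∃ B : ℕ, ∀ f, IsIntFlow n N f → ∀ i j : Fin (n + 1), (i : ℕ) < m → f i j ≤ B := by
  intro m
  induction m with
  | zero => exact ⟨0, fun f _ i j h => absurd h (Nat.not_lt_zero _)⟩
  | succ m ih =>
    obtain ⟨B, hB⟩ := ih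
    refine ⟨B + ∑ i, (N i).natAbs + (n + 1) * B, fun f hf i j hi => ?_⟩
    by_cases h : (i : ℕ) < m
    · have := hB f hf i j h
      omega
    · by_cases hij : i < j
      · have h1 := hf.2 i
        have h2 : (f i j : ℤ) ≤ ∑ j : Fin (n + 1), if i < j then (f i j : ℤ) else 0 := by
          have := Finset.single_le_sum (f := fun j : Fin (n + 1) => if i < j then (f i j : ℤ) else 0)
            (s := Finset.univ) (fun j _ => by positivity) (Finset.mem_univ j)
          simpa [hij] using this
        have h3 : (∑ k : Fin (n + 1), if k < i then (f k i : ℤ) else 0) ≤ (n + 1) * B := by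
          have := Finset.sum_le_card_nsmul (Finset.univ : Finset (Fin (n + 1)))
            (fun k => if k < i then (f k i : ℤ) else 0) B (fun k _ => by
              split_ifs with hk
              · exact_mod_cast hB f hf k i (by have : (k : ℕ) < i := hk; omega)
              · positivity)
          simpa using this
        have h4 : (N i).natAbs ≤ ∑ i, (N i).natAbs :=
          Finset.single_le_sum (f := fun i => (N i).natAbs) (fun j _ => Nat.zero_le _)
            (Finset.mem_univ i)
        zify at h4 ⊢
        have h5 := le_abs_self (N i)
        have : (0 : ℤ) ≤ B := by positivity
        linarith
      · rw [hf.1 i j hij]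
        exact Nat.zero_le _

lemma flow_finite (n : ℕ) (N : Fin (n + 1) → ℤ) :
    Finite {f : Fin (n + 1) → Fin (n + 1) → ℕ // IsIntFlow n N f} := by
  obtain ⟨B, hB⟩ := flow_bdd n N (n + 1)
  refine Finite.of_injective
    (fun f (i j : Fin (n + 1)) => (⟨f.1 i j, Nat.lt_succ_of_le (hB f.1 f.2 i j i.2)⟩ : Fin (B + 1))) ?_
  intro f g h
  apply Subtype.ext
  funext i j
  have := congrFun (congrFun h i) j
  simpa using this

/-- Cumulative divergence of `F`. -/
def cumDiv (n : ℕ) (F : ℕ → ℕ → ℕ) (c : ℕ) : ℤ :=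
  ∑ a ∈ range (c + 1), ((∑ j ∈ range (n + 1), (F a j : ℤ)) - ∑ k ∈ range (n + 1), (F k a : ℤ))

/-- Complete the long edges `F` to a flow of value `t`. -/
def comp (n t : ℕ) (F : ℕ → ℕ → ℕ) (i j : ℕ) : ℕ :=
  if j = i + 1 then (t - cumDiv n F i).toNat else F i j

lemma cumDiv_le (n t k q : ℕ) (F : ℕ → ℕ → ℕ) (hq : q * (k + 1) ^ 2 ≤ t)
    (hF : ∀ i j, F i j ≤ q) (h0 : ∀ i j, ¬ (i + 2 ≤ j ∧ j < i + 2 + k ∧ j ≤ n) → F i j = 0)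
    (c : ℕ) (hc : c ≤ n) : cumDiv n F c ≤ t := by
  have hs : ∀ G : ℕ → ℤ, ∑ j ∈ range (n + 1), G j =
      ∑ j ∈ range (c + 1), G j + ∑ j ∈ Ico (c + 1) (n + 1), G j := fun G =>
    (Finset.sum_range_add_sum_Ico G (by omega)).symm
  unfold cumDiv
  simp_rw [hs]
  rw [Finset.sum_sub_distrib, Finset.sum_add_distrib, Finset.sum_add_distrib,
    Finset.sum_comm (s := range (c + 1)) (t := range (c + 1)) (f := fun a j => (F a j : ℤ))]
  have h1 : (0 : ℤ) ≤ ∑ a ∈ range (c + 1), ∑ j ∈ Ico (c + 1) (n + 1), (F j a : ℤ) := by positivity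
  have h2 : ∑ a ∈ range (c + 1), ∑ j ∈ Ico (c + 1) (n + 1), F a j ≤ q * (k + 1) ^ 2 := by
    calc ∑ a ∈ range (c + 1), ∑ j ∈ Ico (c + 1) (n + 1), F a j
        = ∑ p ∈ range (c + 1) ×ˢ Ico (c + 1) (n + 1), F p.1 p.2 := (Finset.sum_product' _ _ _).symm
      _ ≤ ∑ p ∈ Icc (c - k) c ×ˢ Icc (c + 1) (c + 1 + k), F p.1 p.2 := by
          apply Finset.sum_le_sum_of_ne_zero
          rintro ⟨a, j⟩ hp hne
          have : (a + 2 ≤ j ∧ j < a + 2 + k ∧ j ≤ n) := by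
            by_contra hcon
            exact hne (h0 a j hcon)
          simp only [mem_product, mem_range, mem_Ico, mem_Icc] at hp ⊢
          omega
      _ ≤ (Icc (c - k) c ×ˢ Icc (c + 1) (c + 1 + k)).card • q :=
          Finset.sum_le_card_nsmul _ _ _ (fun p _ => hF _ _)
      _ ≤ q * (k + 1) ^ 2 := by
          rw [card_product, Nat.card_Icc, Nat.card_Icc, smul_eq_mul, mul_comm, pow_two]
          apply Nat.mul_le_mul_left
          apply Nat.mul_le_mul <;> omega
  have h3 : ∑ a ∈ range (c + 1), ∑ j ∈ Ico (c + 1) (n + 1), (F a j : ℤ) ≤ t := by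
    exact_mod_cast h2.trans hq
  linarith

lemma comp_flow (n t k q : ℕ) (hn : 1 ≤ n) (F : ℕ → ℕ → ℕ) (hq : q * (k + 1) ^ 2 ≤ t)
    (hF : ∀ i j, F i j ≤ q) (h0 : ∀ i j, ¬ (i + 2 ≤ j ∧ j < i + 2 + k ∧ j ≤ n) → F i j = 0) :
    IsIntFlow n (cry n t) (fun i j => comp n t F i j) := by
  have hz : ∀ i j : ℕ, ¬ i < j → comp n t F i j = 0 := by
    intro i j hij
    unfold comp
    rw [if_neg (by omega), h0 i j (by omega)]
  have hcast : ∀ i j : ℕ, i ≤ n → (comp n t F i j : ℤ) =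
      (if j = i + 1 then (t - cumDiv n F i) else 0) + F i j := by
    intro i j hi
    unfold comp
    split_ifs with h
    · rw [h0 i j (by omega)]
      have := cumDiv_le n t k q F hq hF h0 i hi
      rw [Int.toNat_of_nonneg (by linarith)]
      simp
    · simp
  refine ⟨fun i j hij => hz i j hij, ?_⟩
  intro i
  have hout : (∑ j : Fin (n + 1), if i < j then (comp n t F i j : ℤ) else 0) =
      (if (i : ℕ) < n then (t - cumDiv n F i) else 0) + ∑ j ∈ range (n + 1), (F i j : ℤ) := by
    have e : ∀ j : Fin (n + 1), (if i < j then (comp n t F i j : ℤ) else 0) =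
        (fun j : ℕ => (if j = (i : ℕ) + 1 then (t - cumDiv n F i) else 0) + (F i j : ℤ)) j := by
      intro j
      dsimp only
      rw [← hcast i j (by omega)]
      split_ifs with h
      · rfl
      · rw [hz i j h]; rfl
    rw [Finset.sum_congr rfl (fun j _ => e j), Fin.sum_univ_eq_sum_range
      (fun j : ℕ => (if j = (i : ℕ) + 1 then (t - cumDiv n F i) else 0) + (F i j : ℤ)),
      Finset.sum_add_distrib, Finset.sum_ite_eq']
    simp
  have hin : (∑ k : Fin (n + 1), if k < i then (comp n t F k i : ℤ) else 0) =
      (if 0 < (i : ℕ) then (t - cumDiv n F (i - 1)) else 0) + ∑ k ∈ range (n + 1), (F k i : ℤ) := by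
    have e : ∀ k : Fin (n + 1), (if k < i then (comp n t F k i : ℤ) else 0) =
        (fun k : ℕ => (if (i : ℕ) = k + 1 then (t - cumDiv n F k) else 0) + (F k i : ℤ)) k := by
      intro k
      dsimp only
      rw [← hcast k i (by omega)]
      split_ifs with h
      · rfl
      · rw [hz k i h]; rfl
    rw [Finset.sum_congr rfl (fun j _ => e j), Fin.sum_univ_eq_sum_range
      (fun k : ℕ => (if (i : ℕ) = k + 1 then (t - cumDiv n F k) else 0) + (F k i : ℤ)),
      Finset.sum_add_distrib]
    congr 1
    obtain ⟨i, hi⟩ := i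
    cases i with
    | zero => simp
    | succ i =>
      simp only [Nat.add_right_cancel_iff]
      rw [Finset.sum_ite_eq]
      have : i < n + 1 := by omega
      simp [this]
  rw [hout, hin]
  have hstep : ∀ c, cumDiv n F (c + 1) = cumDiv n F c +
      ((∑ j ∈ range (n + 1), (F (c + 1) j : ℤ)) - ∑ k ∈ range (n + 1), (F k (c + 1) : ℤ)) :=
    fun c => by unfold cumDiv; rw [Finset.sum_range_succ]
  have hzero : cumDiv n F 0 =
      ((∑ j ∈ range (n + 1), (F 0 j : ℤ)) - ∑ k ∈ range (n + 1), (F k 0 : ℤ)) := by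
    simp [cumDiv]
  have hlast : cumDiv n F n = 0 := by
    unfold cumDiv
    rw [Finset.sum_sub_distrib, Finset.sum_comm, sub_self]
  obtain ⟨i, hi⟩ := i
  unfold cry
  dsimp only
  cases i with
  | zero =>
    rw [if_pos (by omega), if_neg (by omega), if_pos rfl, hzero]
    ring
  | succ i =>
    rw [if_pos (by omega : 0 < i + 1), if_neg (by omega : ¬ i + 1 = 0)]
    have := hstep i
    rw [Nat.add_sub_cancel]
    by_cases hin : i + 1 = n
    · rw [if_pos hin, if_neg (by omega)]
      rw [hin] at this ⊢
      rw [hlast] at this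
      linarith
    · rw [if_neg hin, if_pos (by omega)]
      linarith

/-- Long edges from free parameters. -/
def longE (n k q : ℕ) (g : Fin (n - (k + 1)) × Fin k → Fin (q + 1)) (i j : ℕ) : ℕ :=
  if h : i < n - (k + 1) ∧ i + 2 ≤ j ∧ j - (i + 2) < k then
    (g (⟨i, h.1⟩, ⟨j - (i + 2), h.2.2⟩) : ℕ) else 0

lemma Kn_ge (n t k q : ℕ) (hn : 1 ≤ n) (hq : q * (k + 1) ^ 2 ≤ t) :
    (q + 1) ^ ((n - (k + 1)) * k) ≤ Kn n (cry n t) := by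
  have := flow_finite n (cry n t)
  have hf : ∀ g : Fin (n - (k + 1)) × Fin k → Fin (q + 1),
      IsIntFlow n (cry n t) (fun i j => comp n t (longE n k q g) i j) := by
    intro g
    apply comp_flow n t k q hn _ hq
    · intro i j
      unfold longE
      split_ifs
      · omega
      · omega
    · intro i j h
      unfold longE
      rw [dif_neg (by omega)]
  have hinj : Function.Injective (fun g : Fin (n - (k + 1)) × Fin k → Fin (q + 1) =>
      (⟨_, hf g⟩ : {f : Fin (n + 1) → Fin (n + 1) → ℕ // IsIntFlow n (cry n t) f})) := by
    intro g g' h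
    have h1 := congrArg Subtype.val h
    funext ⟨a, d⟩
    have h2 := congrFun (congrFun h1 ⟨a, by omega⟩) ⟨a + 2 + d, by omega⟩
    have h3 : (a : ℕ) < n - (k + 1) ∧ (a : ℕ) + 2 ≤ a + 2 + d ∧ (a : ℕ) + 2 + d - (a + 2) < k := by
      omega
    have h4 : (a : ℕ) + 2 + d - (a + 2) = d := by omega
    have h5 : ¬ ((a : ℕ) + 2 + d = a + 1) := by omega
    simp only [comp, longE, if_neg h5, dif_pos h3] at h2
    simp only [h4] at h2
    exact Fin.ext h2
  have hc := Nat.card_le_card_of_injective _ hinj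
  unfold Kn
  refine le_trans (le_of_eq ?_) hc
  simp [Nat.card_eq_fintype_card]

lemma pow4 (k : ℕ) : (k + 1) ^ 4 ≤ 64 * 2 ^ k := by
  by_cases h : k < 6
  · interval_cases k <;> norm_num
  · push Not at h
    induction k, h using Nat.le_induction with
    | base => norm_num
    | succ k hk ih =>
      rw [pow_succ 2 k]
      have : (k + 1 + 1) ^ 4 ≤ 2 * (k + 1) ^ 4 := by
        obtain ⟨m, rfl⟩ := Nat.exists_eq_add_of_le hk
        ring_nf
        nlinarith [Nat.zero_le (m ^ 2), Nat.zero_le (m ^ 3), Nat.zero_le (m ^ 4), Nat.zero_le m]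
      linarith

end KCRY

theorem kostant_CRY_lower_bound :
    ∃ C : ℝ, 0 < C ∧ ∀ t n : ℕ, 1 ≤ t → 1 ≤ n →
      ((n : ℝ) / 2) * Real.logb 2 t ^ 2 - C * n * (1 + Real.logb 2 t) -
          C * (1 + Real.logb 2 t) ^ 3 ≤
        Real.logb 2
          (Kn n fun i =>
            if (i : ℕ) = 0 then (t : ℤ) else if (i : ℕ) = n then -(t : ℤ) else 0) := by
  refine ⟨4, by norm_num, fun t n ht hn => ?_⟩
  change _ ≤ Real.logb 2 (Kn n (KCRY.cry n t))
  set L := Real.logb 2 t with hL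
  have htR : (1 : ℝ) ≤ t := by exact_mod_cast ht
  have hnR : (1 : ℝ) ≤ n := by exact_mod_cast hn
  have hL0 : 0 ≤ L := Real.logb_nonneg (by norm_num) htR
  have hK0 : 0 ≤ Real.logb 2 (Kn n (KCRY.cry n t)) := by
    rcases Nat.eq_zero_or_pos (Kn n (KCRY.cry n t)) with h | h
    · simp [h]
    · exact Real.logb_nonneg (by norm_num) (by exact_mod_cast h)
  have hL3 : 0 ≤ (1 + L) ^ 3 := by positivity
  by_cases hL6 : L < 6
  · refine le_trans ?_ hK0
    have : 0 ≤ n * (L * (6 - L)) := by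
      have : 0 ≤ 6 - L := by linarith
      positivity
    nlinarith
  push Not at hL6
  obtain ⟨k, hk⟩ : ∃ k, k = Nat.log 2 t := ⟨_, rfl⟩
  have hk1 : 2 ^ k ≤ t := hk ▸ Nat.pow_log_le_self 2 (by omega)
  have hk2 : t < 2 ^ (k + 1) := hk ▸ Nat.lt_pow_succ_log_self (by norm_num) t
  have hkL : (k : ℝ) ≤ L := by
    rw [hL, Real.le_logb_iff_rpow_le (by norm_num) (by linarith), Real.rpow_natCast]
    exact_mod_cast hk1
  have hkL2 : L ≤ k + 1 := by
    rw [hL, Real.logb_le_iff_le_rpow (by norm_num) (by linarith)]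
    have : ((2 : ℝ) ^ ((k : ℝ) + 1)) = 2 ^ (k + 1) := by
      rw [← Real.rpow_natCast]; push_cast; rfl
    rw [this]
    exact_mod_cast hk2.le
  by_cases hnk : n < k + 1
  · refine le_trans ?_ hK0
    have h1 : (n : ℝ) ≤ 1 + L := by
      have : (n : ℝ) ≤ k + 1 := by exact_mod_cast hnk.le
      linarith
    have h2 : (n : ℝ) * L ^ 2 ≤ (1 + L) * L ^ 2 := by gcongr
    have h3 : (1 + L) * L ^ 2 ≤ (1 + L) ^ 3 := by nlinarith [sq_nonneg L]
    have h4 : 0 ≤ 4 * n * (1 + L) := by positivity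
    nlinarith
  push Not at hnk
  set q := t / (k + 1) ^ 2 with hqdef
  have hq : q * (k + 1) ^ 2 ≤ t := Nat.div_mul_le_self _ _
  have hq2 : t < (q + 1) * (k + 1) ^ 2 := by
    rw [mul_comm]; exact Nat.lt_mul_div_succ t (by positivity)
  have hKge := KCRY.Kn_ge n t k q hn hq
  have hsq : (t : ℝ) ≤ 64 * (q + 1) ^ 2 := by
    have h1 := KCRY.pow4 k
    have h2 : t ^ 2 ≤ ((q + 1) * (k + 1) ^ 2) ^ 2 := Nat.pow_le_pow_left hq2.le 2
    have h3 : t * t ≤ (64 * (q + 1) ^ 2) * t := by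
      calc t * t = t ^ 2 := by ring
        _ ≤ ((q + 1) * (k + 1) ^ 2) ^ 2 := h2
        _ = (q + 1) ^ 2 * (k + 1) ^ 4 := by ring
        _ ≤ (q + 1) ^ 2 * (64 * t) := by gcongr; linarith
        _ = _ := by ring
    exact_mod_cast Nat.le_of_mul_le_mul_right h3 (by omega)
  have hlogq : L / 2 - 3 ≤ Real.logb 2 ((q : ℝ) + 1) := by
    have h1 : L ≤ Real.logb 2 (64 * ((q : ℝ) + 1) ^ 2) :=
      Real.logb_le_logb_of_le (by norm_num) (by linarith) hsq
    rw [Real.logb_mul (by norm_num) (by positivity), Real.logb_pow] at h1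
    have h2 : Real.logb 2 64 = 6 := by
      rw [show (64 : ℝ) = 2 ^ 6 by norm_num, Real.logb_pow, Real.logb_self_eq_one (by norm_num)]
      norm_num
    rw [h2] at h1
    push_cast at h1
    linarith
  have hmain : (((n - (k + 1)) * k : ℕ) : ℝ) * Real.logb 2 ((q : ℝ) + 1) ≤
      Real.logb 2 (Kn n (KCRY.cry n t)) := by
    rw [← Real.logb_pow]
    apply Real.logb_le_logb_of_le (by norm_num) (by positivity)
    exact_mod_cast hKge
  refine le_trans ?_ hmain
  push_cast [Nat.cast_sub hnk]
  have hnk' : (0 : ℝ) ≤ n - (k + 1) := by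
    have : ((k + 1 : ℕ) : ℝ) ≤ n := by exact_mod_cast hnk
    push_cast at this
    linarith
  have s1 : ((n : ℝ) - (k + 1)) * k * (L / 2 - 3) ≤
      ((n : ℝ) - (k + 1)) * k * Real.logb 2 ((q : ℝ) + 1) := by gcongr
  refine le_trans ?_ s1
  have s2 : ((n : ℝ) - (k + 1)) * (L - 1) * (L / 2 - 3) ≤
      ((n : ℝ) - (k + 1)) * k * (L / 2 - 3) := by
    have : 0 ≤ L / 2 - 3 := by linarith
    gcongr
    linarith
  refine le_trans ?_ s2
  have s3 : ((n : ℝ) - (L + 1)) * ((L - 1) * (L / 2 - 3)) ≤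
      ((n : ℝ) - (k + 1)) * ((L - 1) * (L / 2 - 3)) := by
    have : 0 ≤ (L - 1) * (L / 2 - 3) := mul_nonneg (by linarith) (by linarith)
    gcongr
  rw [mul_assoc ((n : ℝ) - (k + 1)) (L - 1) (L / 2 - 3)]
  refine le_trans ?_ s3
  have : 0 ≤ n * L := by positivity
  have : 0 ≤ L ^ 3 := by positivity
  have : 0 ≤ L ^ 2 := by positivity
  nlinarith
end

section
/- There exists a constant C > 0 such that for all integers t ≥ 1 and n ≥ 2, log K_n(t·(n, n−2, n−4, …, −n+4, −n+2, −n)) ≥ (n²/2)·log((1+t)^{1+t}/t^{t}) − C·n·log(n·t), where log is the natural logarithm. -/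
open Finset

/-- Edges other than the path edges. -/
abbrev FreeEdge (n : ℕ) : Type :=
  {e : Fin (n + 1) × Fin (n + 1) // (e.1 : ℕ) + 1 < (e.2 : ℕ)}

theorem sum_freeEdge {M : Type} [AddCommMonoid M] (n : ℕ) (φ : Fin (n + 1) → Fin (n + 1) → M) :
    ∑ e : FreeEdge n, φ e.1.1 e.1.2 =
      ∑ a : Fin (n + 1), ∑ b : Fin (n + 1), if (a : ℕ) + 1 < (b : ℕ) then φ a b else 0 := by
  rw [← Fintype.sum_prod_type' (f := fun a b : Fin (n + 1) =>
    if (a : ℕ) + 1 < (b : ℕ) then φ a b else 0), ← Finset.sum_filter]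
  exact (Finset.sum_subtype (Finset.univ.filter fun e : Fin (n + 1) × Fin (n + 1) =>
    (e.1 : ℕ) + 1 < (e.2 : ℕ)) (by simp) (fun e => φ e.1 e.2)).symm

theorem flows_finite (n : ℕ) (N : Fin (n + 1) → ℤ) :
    {f : Fin (n + 1) → Fin (n + 1) → ℕ | IsIntFlow n N f}.Finite := by
  refine (Set.finite_Icc (0 : Fin (n + 1) → Fin (n + 1) → ℕ)
    (fun _ _ => (∑ i : Fin (n + 1), -((i : ℕ) : ℤ) * N i).toNat)).subset ?_
  intro f hf
  refine ⟨fun _ _ => Nat.zero_le _, ?_⟩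
  intro a b
  obtain ⟨h0, h1⟩ := hf
  have key : ∑ i : Fin (n + 1), -((i : ℕ) : ℤ) * N i =
      ∑ i : Fin (n + 1), ∑ j : Fin (n + 1),
        if i < j then (((j : ℕ) : ℤ) - ((i : ℕ) : ℤ)) * (f i j : ℤ) else 0 := by
    have : ∀ i : Fin (n + 1), -((i : ℕ) : ℤ) * N i =
        (∑ k : Fin (n + 1), if k < i then ((i : ℕ) : ℤ) * (f k i : ℤ) else 0) -
        (∑ j : Fin (n + 1), if i < j then ((i : ℕ) : ℤ) * (f i j : ℤ) else 0) := by
      intro i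
      rw [← h1 i]
      have e1 : ∀ P : Prop, ∀ [Decidable P], ∀ y : ℤ, (if P then ((i : ℕ) : ℤ) * y else 0) =
        ((i : ℕ) : ℤ) * (if P then y else 0) := by intro P _ y; split_ifs <;> simp
      simp only [e1, ← Finset.mul_sum]
      ring
    simp only [this]
    rw [Finset.sum_sub_distrib, Finset.sum_comm, ← Finset.sum_sub_distrib]
    refine Finset.sum_congr rfl fun i _ => ?_
    rw [← Finset.sum_sub_distrib]
    refine Finset.sum_congr rfl fun j _ => ?_
    split_ifs <;> ring
  have hnn : ∀ i j : Fin (n + 1),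
      (0 : ℤ) ≤ if i < j then (((j : ℕ) : ℤ) - ((i : ℕ) : ℤ)) * (f i j : ℤ) else 0 := by
    intro i j
    split_ifs with h
    · have : ((i : ℕ) : ℤ) < ((j : ℕ) : ℤ) := by exact_mod_cast h
      exact mul_nonneg (by linarith) (by positivity)
    · exact le_rfl
  by_cases hab : a < b
  · have h2 : (f a b : ℤ) ≤ ∑ i : Fin (n + 1), -((i : ℕ) : ℤ) * N i := by
      rw [key]
      refine le_trans ?_ (Finset.single_le_sum (fun i _ => Finset.sum_nonneg fun j _ => hnn i j)
        (Finset.mem_univ a))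
      refine le_trans ?_ (Finset.single_le_sum (fun j _ => hnn a j) (Finset.mem_univ b))
      rw [if_pos hab]
      have : ((a : ℕ) : ℤ) < ((b : ℕ) : ℤ) := by exact_mod_cast hab
      nlinarith [Int.natCast_nonneg (f a b)]
    show f a b ≤ Int.toNat _
    omega
  · rw [h0 a b hab]; exact Nat.zero_le _

/-- extension of a weight on free edges by zero -/
def extW (n : ℕ) (w : FreeEdge n → ℕ) (a b : Fin (n + 1)) : ℕ :=
  if h : (a : ℕ) + 1 < (b : ℕ) then w ⟨(a, b), h⟩ else 0

/-- Flow of the free edges through the `x`-th cut. -/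
def cutX (n : ℕ) (w : FreeEdge n → ℕ) (x : ℕ) : ℕ :=
  ∑ a : Fin (n + 1), ∑ b : Fin (n + 1), if (a : ℕ) < x ∧ x ≤ (b : ℕ) then extW n w a b else 0

theorem cutX_eq (n : ℕ) (w : FreeEdge n → ℕ) (x : ℕ) :
    cutX n w x = ∑ e : FreeEdge n, if (e.1.1 : ℕ) < x ∧ x ≤ (e.1.2 : ℕ) then w e else 0 := by
  have h1 : ∀ e : FreeEdge n, w e = extW n w e.1.1 e.1.2 := by
    rintro ⟨⟨a, b⟩, h⟩
    simp only [extW]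
    rw [dif_pos h]
  simp only [h1]
  rw [sum_freeEdge n (fun a b => if (a : ℕ) < x ∧ x ≤ (b : ℕ) then extW n w a b else 0)]
  unfold cutX
  refine Finset.sum_congr rfl fun a _ => Finset.sum_congr rfl fun b _ => ?_
  by_cases h : (a : ℕ) + 1 < (b : ℕ)
  · rw [if_pos h]
  · rw [if_neg h]; simp [extW, h]

theorem cutX_diff (n : ℕ) (w : FreeEdge n → ℕ) (i : Fin (n + 1)) :
    (cutX n w ((i : ℕ) + 1) : ℤ) - cutX n w i =
      ∑ b, (extW n w i b : ℤ) - ∑ a, (extW n w a i : ℤ) := by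
  unfold cutX
  push_cast
  have e1 : ∑ b, (extW n w i b : ℤ) = ∑ a, ∑ b, if a = i then (extW n w a b : ℤ) else 0 := by
    rw [Finset.sum_comm]; simp
  have e2 : ∑ a, (extW n w a i : ℤ) = ∑ a, ∑ b, if b = i then (extW n w a b : ℤ) else 0 := by
    simp
  rw [e1, e2]
  simp only [← Finset.sum_sub_distrib]
  refine Finset.sum_congr rfl fun a _ => Finset.sum_congr rfl fun b _ => ?_
  by_cases h : (a : ℕ) + 1 < (b : ℕ)
  · simp only [Fin.ext_iff]
    split_ifs <;> omega
  · simp [extW, h]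

theorem kn_ge (n t : ℕ) (G : Set (FreeEdge n → ℕ))
    (hG : G = {w | ∀ x ∈ Finset.Icc 1 n, cutX n w x ≤ t * x * (n + 1 - x)}) :
    G.Finite ∧ G.ncard ≤ Kn n fun i => (t : ℤ) * ((n : ℤ) - 2 * ((i : ℕ) : ℤ)) := by
  set N : Fin (n + 1) → ℤ := fun i => (t : ℤ) * ((n : ℤ) - 2 * ((i : ℕ) : ℤ)) with hN
  let F : (FreeEdge n → ℕ) → Fin (n + 1) → Fin (n + 1) → ℕ := fun w a b =>
    extW n w a b + if (a : ℕ) + 1 = (b : ℕ) then t * b * (n + 1 - b) - cutX n w b else 0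
  have hX0 : ∀ w, cutX n w 0 = 0 := by intro w; simp [cutX]
  have hXn : ∀ w, cutX n w (n + 1) = 0 := by
    intro w
    unfold cutX
    refine Finset.sum_eq_zero fun a _ => Finset.sum_eq_zero fun b _ => if_neg ?_
    have := b.isLt
    omega
  have hflow : ∀ w ∈ G, IsIntFlow n N (F w) := by
    intro w hw
    rw [hG] at hw
    have hD : ∀ x ≤ n + 1, cutX n w x ≤ t * x * (n + 1 - x) := by
      intro x hx
      rcases Nat.eq_zero_or_pos x with rfl | h
      · simp [hX0]
      rcases Nat.eq_or_lt_of_le hx with rfl | h'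
      · simp [hXn]
      exact hw x (by simp; omega)
    refine ⟨?_, ?_⟩
    · intro i j hij
      have : ¬ ((i : ℕ) < j) := fun h => hij h
      simp only [F, extW]
      rw [dif_neg (by omega), if_neg (by omega)]
    · intro i
      let D : ℕ → ℤ := fun x => (t : ℤ) * x * ((n : ℤ) + 1 - x) - cutX n w x
      have hF : ∀ a b : Fin (n + 1), (if a < b then (F w a b : ℤ) else 0) =
          (extW n w a b : ℤ) + if (a : ℕ) + 1 = (b : ℕ) then D b else 0 := by
        intro a b
        by_cases hab : a < b
        · rw [if_pos hab]
          simp only [F]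
          push_cast
          congr 1
          have hb := b.isLt
          by_cases h : (a : ℕ) + 1 = (b : ℕ)
          · rw [if_pos h, if_pos h, Nat.cast_sub (hD b hb.le)]
            simp only [D]
            push_cast [Nat.cast_sub hb.le]
            ring
          · rw [if_neg h, if_neg h]
        · rw [if_neg hab]
          have : ¬ ((a : ℕ) < b) := fun h => hab h
          simp only [extW]
          rw [dif_neg (by omega), if_neg (by omega)]
          simp
      simp only [hF, Finset.sum_add_distrib]
      have h1 : (∑ b : Fin (n + 1), if (i : ℕ) + 1 = (b : ℕ) then D b else 0) = D (i + 1) := by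
        by_cases hi : (i : ℕ) + 1 < n + 1
        · rw [Finset.sum_eq_single ⟨(i : ℕ) + 1, hi⟩]
          · simp
          · intro b _ hb
            rw [if_neg]
            intro h; exact hb (Fin.ext h.symm)
          · simp
        · have hi' : (i : ℕ) = n := by have := i.isLt; omega
          rw [Finset.sum_eq_zero]
          · simp [D, hi', hXn]
          · intro b _
            rw [if_neg]
            have := b.isLt
            omega
      have h2 : (∑ a : Fin (n + 1), if (a : ℕ) + 1 = (i : ℕ) then D i else 0) = D i := by
        by_cases hi : (i : ℕ) = 0
        · rw [Finset.sum_eq_zero]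
          · simp [D, hi, hX0]
          · intro b _
            rw [if_neg]
            omega
        · have hlt : (i : ℕ) - 1 < n + 1 := by have := i.isLt; omega
          rw [Finset.sum_eq_single ⟨(i : ℕ) - 1, hlt⟩]
          · rw [if_pos]; show (i : ℕ) - 1 + 1 = i; omega
          · intro b _ hb
            rw [if_neg]
            intro h; apply hb; apply Fin.ext; show (b : ℕ) = (i : ℕ) - 1; omega
          · simp
      rw [h1, h2]
      have h3 := cutX_diff n w i
      simp only [D, hN]
      push_cast
      linear_combination -h3
  have hinj : Function.Injective fun w : G => (⟨F w.1, hflow w.1 w.2⟩ :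
      {f : Fin (n + 1) → Fin (n + 1) → ℕ // IsIntFlow n N f}) := by
    rintro ⟨w, hw⟩ ⟨w', hw'⟩ h
    have h' : F w = F w' := congrArg Subtype.val h
    apply Subtype.ext
    funext e
    obtain ⟨⟨a, b⟩, hab⟩ := e
    have := congrFun (congrFun h' a) b
    simp only [F, extW] at this
    simp only at hab
    rw [dif_pos hab, dif_pos hab, if_neg (by omega), if_neg (by omega)] at this
    simpa using this
  have hfin : Finite {f : Fin (n + 1) → Fin (n + 1) → ℕ // IsIntFlow n N f} :=
    (flows_finite n N).to_subtype
  refine ⟨?_, ?_⟩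
  · have : Finite G := Finite.of_injective _ hinj
    exact Set.toFinite G
  · exact Nat.card_le_card_of_injective _ hinj

open MeasureTheory ProbabilityTheory in
theorem geo_aux (m : ℝ) (hm : 0 < m) : ∃ ν : Measure ℕ, IsProbabilityMeasure ν ∧
    (∀ k : ℕ, ν.real {k} = Real.exp (-(Real.log (1 + m) + Real.log (1 + 1 / m) * k))) ∧
    MemLp (fun k : ℕ => (k : ℝ)) 2 ν ∧ (∫ k : ℕ, (k : ℝ) ∂ν = m) ∧
    Var[fun k : ℕ => (k : ℝ); ν] = m ^ 2 + m := by
  have h1 : 0 < 1 + m := by linarith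
  let p : unitInterval := ⟨1 / (1 + m), by positivity, by rw [div_le_one h1]; linarith⟩
  have hp : p ≠ 0 := by
    intro h
    have : (1 / (1 + m) : ℝ) = 0 := congrArg Subtype.val h
    have : (0 : ℝ) < 1 / (1 + m) := by positivity
    linarith
  have hpv : (p : ℝ) = 1 / (1 + m) := rfl
  set r : ℝ := m / (1 + m) with hr
  have hpr : (1 - p : ℝ) = r := by rw [hpv, hr]; field_simp; ring
  have hr0 : 0 ≤ r := by positivity
  have hr1 : ‖r‖ < 1 := by rw [Real.norm_of_nonneg hr0, hr, div_lt_one h1]; linarith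
  have h1r : 1 - r = 1 / (1 + m) := by rw [hr]; field_simp; ring
  have hs1 : HasSum (fun k : ℕ => (r ^ k * p) • (k : ℝ)) m := by
    have := (hasSum_coe_mul_geometric_of_norm_lt_one hr1).mul_left (p : ℝ)
    have hv : (p : ℝ) * (r / (1 - r) ^ 2) = m := by rw [h1r, hpv, hr]; field_simp
    rw [hv] at this
    refine Eq.subst (motive := fun g : ℕ → ℝ => HasSum g _) (funext fun k => ?_) this
    rw [smul_eq_mul]; ring
  have hs2 : HasSum (fun k : ℕ => (r ^ k * p) • (k : ℝ) ^ 2) (2 * m ^ 2 + m) := by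
    have a0 := (hasSum_choose_mul_geometric_of_norm_lt_one 2 hr1)
    have a1 := (hasSum_coe_mul_geometric_of_norm_lt_one hr1)
    have a2 := (hasSum_geometric_of_norm_lt_one hr1)
    have := (((a0.mul_left 2).sub (a1.mul_left 3)).sub (a2.mul_left 2)).mul_left (p : ℝ)
    have hv : (p : ℝ) * (2 * (1 / (1 - r) ^ (2 + 1)) - 3 * (r / (1 - r) ^ 2) - 2 * (1 - r)⁻¹)
        = 2 * m ^ 2 + m := by
      have hne : 1 + m ≠ 0 := h1.ne'
      have e1 : (1 - r)⁻¹ = 1 + m := by rw [h1r]; simp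
      have e2 : r * (1 + m) = m := by rw [hr]; field_simp
      have e3 : (p : ℝ) * (1 + m) = 1 := by rw [hpv]; field_simp
      rw [div_eq_mul_inv, div_eq_mul_inv, ← inv_pow, ← inv_pow, e1]
      linear_combination (2 * (1 + m) ^ 2 - 3 * m - 2) * e3 - 3 * p * (1 + m) * e2
    rw [hv] at this
    refine Eq.subst (motive := fun g : ℕ → ℝ => HasSum g _) (funext fun k => ?_) this
    have hc : (((k + 2 : ℕ).choose 2 : ℕ) : ℝ) = ((k : ℝ) + 2) * (k + 1) / 2 := by
      rw [Nat.cast_choose_two]; push_cast; ring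
    rw [hc, smul_eq_mul]; ring
  have hi1 : Integrable (fun k : ℕ => (k : ℝ)) (geometricMeasure p) := by
    rw [integrable_geometricMeasure_iff hp, hpr]
    simpa using hs1.summable
  have hi2 : Integrable (fun k : ℕ => (k : ℝ) ^ 2) (geometricMeasure p) := by
    rw [integrable_geometricMeasure_iff hp, hpr]
    simpa using hs2.summable
  have hmean : ∫ k : ℕ, (k : ℝ) ∂(geometricMeasure p) = m := by
    have := hasSum_integral_geometricMeasure hp hi1
    rw [hpr] at this
    exact this.unique hs1
  have hsq : ∫ k : ℕ, (k : ℝ) ^ 2 ∂(geometricMeasure p) = 2 * m ^ 2 + m := by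
    have := hasSum_integral_geometricMeasure hp hi2
    rw [hpr] at this
    exact this.unique hs2
  have hL : MemLp (fun k : ℕ => (k : ℝ)) 2 (geometricMeasure p) := by
    rw [memLp_two_iff_integrable_sq (by fun_prop)]
    exact hi2
  refine ⟨geometricMeasure p, inferInstance, ?_, hL, hmean, ?_⟩
  · intro k
    rw [geometricMeasure_real_singleton hp, hpr, hpv]
    have e1 : (1 + 1 / m) = r⁻¹ := by rw [hr]; field_simp; ring
    have hrp : 0 < r := by positivity
    rw [e1, Real.log_inv, neg_add, Real.exp_add, Real.exp_neg, Real.exp_log h1]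
    rw [show -(-Real.log r * (k : ℝ)) = (k : ℝ) * Real.log r by ring, Real.exp_nat_mul,
      Real.exp_log hrp]
    ring
  · rw [variance_eq_sub hL]
    have : ∫ x, ((fun k : ℕ => (k : ℝ)) ^ 2) x ∂geometricMeasure p = 2 * m ^ 2 + m := hsq
    rw [this, hmean]; ring

open MeasureTheory ProbabilityTheory in
/-- Product of geometric laws: Chebyshev and point masses. -/
theorem prod_geo {ι : Type} [Fintype ι] (m : ι → ℝ) (hm : ∀ e, 0 < m e) :
    ∃ μ : Measure (ι → ℕ), IsProbabilityMeasure μ ∧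
    (∀ w : ι → ℕ, μ.real {w} =
      Real.exp (-(∑ e, (Real.log (1 + m e) + Real.log (1 + 1 / m e) * w e)))) ∧
    ∀ (c : ι → ℝ) (r : ℝ), 0 < r →
      μ.real {w | r ≤ |∑ e, c e * (w e : ℝ) - ∑ e, c e * m e|} ≤
        (∑ e, c e ^ 2 * (m e ^ 2 + m e)) / r ^ 2 := by
  choose ν hν hs hL hmean hvar using fun e => geo_aux (m e) (hm e)
  refine ⟨Measure.pi ν, inferInstance, ?_, ?_⟩
  · intro w
    rw [measureReal_def, Measure.pi_singleton, ENNReal.toReal_prod, ← Finset.sum_neg_distrib,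
      Real.exp_sum]
    exact Finset.prod_congr rfl fun e _ => hs e (w e)
  · intro c r hr
    have hL' : ∀ e, MemLp (fun k : ℕ => c e * (k : ℝ)) 2 (ν e) := fun e => (hL e).const_mul _
    have hL2 : ∀ e, MemLp (fun w : ι → ℕ => c e * (w e : ℝ)) 2 (Measure.pi ν) := fun e =>
      (hL' e).comp_measurePreserving (measurePreserving_eval _ e)
    have hV := variance_sum_pi hL'
    have hM : ∫ w : ι → ℕ, ∑ e, c e * (w e : ℝ) ∂(Measure.pi ν) = ∑ e, c e * m e := by
      rw [integral_finsetSum _ fun e _ => (hL2 e).integrable (by norm_num)]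
      refine Finset.sum_congr rfl fun e _ => ?_
      rw [integral_comp_eval (μ := ν) (i := e) (f := fun k : ℕ => c e * (k : ℝ)) (by fun_prop),
        integral_const_mul, hmean]
    have hV2 : Var[fun w : ι → ℕ => ∑ e, c e * (w e : ℝ); Measure.pi ν] =
        ∑ e, c e ^ 2 * (m e ^ 2 + m e) := by
      have : (fun w : ι → ℕ => ∑ e, c e * (w e : ℝ)) =
        ∑ e, fun w : ι → ℕ => c e * (w e : ℝ) := by ext w; simp
      rw [this, hV]
      refine Finset.sum_congr rfl fun e _ => ?_
      rw [variance_const_mul, hvar]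
    have := meas_ge_le_variance_div_sq (memLp_finsetSum Finset.univ fun e _ => hL2 e) hr
    rw [hM, hV2] at this
    rw [measureReal_def]
    refine ENNReal.toReal_le_of_le_ofReal ?_ this
    have : ∀ e, 0 < m e ^ 2 + m e := fun e => by have := hm e; positivity
    exact div_nonneg (Finset.sum_nonneg fun e _ => mul_nonneg (sq_nonneg _) (this e).le) (sq_nonneg _)

open MeasureTheory in
/-- Counting lemma. -/
theorem count_lemma {ι : Type} [Fintype ι] (m : ι → ℝ) (hm : ∀ e, 0 < m e)
    {κ : Type} (s : Finset κ) (c : κ → ι → ℝ) (b : κ → ℝ) (d : κ → ℝ) (hd : ∀ k ∈ s, 0 < d k)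
    (hb : ∀ k ∈ s, ∑ e, c k e * m e + d k ≤ b k) (η : ℝ) (hη : 0 < η)
    (G : Set (ι → ℕ)) (hG : G.Finite)
    (hsub : ∀ w : ι → ℕ, (∀ k ∈ s, ∑ e, c k e * (w e : ℝ) ≤ b k) → w ∈ G)
    (hbad : ∑ k ∈ s, (∑ e, c k e ^ 2 * (m e ^ 2 + m e)) / d k ^ 2 +
      (∑ e, Real.log (1 + 1 / m e) ^ 2 * (m e ^ 2 + m e)) / η ^ 2 ≤ 1 / 2) :
    ∑ e, (Real.log (1 + m e) + Real.log (1 + 1 / m e) * m e) - η - Real.log 2 ≤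
      Real.log (G.ncard) := by
  obtain ⟨μ, hμ, hpt, hch⟩ := prod_geo m hm
  set Y : (ι → ℕ) → ℝ := fun w => ∑ e, Real.log (1 + 1 / m e) * (w e : ℝ) with hY
  set y : ℝ := ∑ e, Real.log (1 + 1 / m e) * m e with hy
  set B0 : Set (ι → ℕ) := {w | η ≤ |Y w - y|} with hB0
  set B : κ → Set (ι → ℕ) := fun k => {w | d k ≤ |∑ e, c k e * (w e : ℝ) - ∑ e, c k e * m e|}
    with hB
  set G' : Set (ι → ℕ) := {w ∈ G | y - η ≤ Y w} with hG'
  have hcov : (Set.univ : Set (ι → ℕ)) ⊆ G' ∪ ((⋃ k ∈ s, B k) ∪ B0) := by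
    intro w _
    by_cases h0 : w ∈ B0
    · right; right; exact h0
    by_cases h1 : w ∈ ⋃ k ∈ s, B k
    · right; left; exact h1
    left
    simp only [hB0, Set.mem_ofPred_eq, not_le] at h0
    simp only [Set.mem_iUnion, not_exists] at h1
    refine ⟨hsub w fun k hk => ?_, by linarith [(abs_lt.1 h0).1]⟩
    have := h1 k hk
    simp only [hB, Set.mem_ofPred_eq, not_le] at this
    linarith [(abs_lt.1 this).2, hb k hk]
  have hfin : G'.Finite := hG.subset fun w hw => hw.1
  have h1 : (1 : ℝ) ≤ μ.real G' + (∑ k ∈ s, μ.real (B k) + μ.real B0) := by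
    calc (1 : ℝ) = μ.real Set.univ := by simp
      _ ≤ μ.real (G' ∪ ((⋃ k ∈ s, B k) ∪ B0)) := measureReal_mono hcov
      _ ≤ μ.real G' + μ.real ((⋃ k ∈ s, B k) ∪ B0) := measureReal_union_le _ _
      _ ≤ μ.real G' + (μ.real (⋃ k ∈ s, B k) + μ.real B0) := by
        gcongr; exact measureReal_union_le _ _
      _ ≤ _ := by
        gcongr; exact measureReal_biUnion_finset_le _ _
  have h2 : ∑ k ∈ s, μ.real (B k) ≤ ∑ k ∈ s, (∑ e, c k e ^ 2 * (m e ^ 2 + m e)) / d k ^ 2 :=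
    Finset.sum_le_sum fun k hk => hch (c k) (d k) (hd k hk)
  have h3 := hch (fun e => Real.log (1 + 1 / m e)) η hη
  have h3' : μ.real B0 ≤ (∑ e, Real.log (1 + 1 / m e) ^ 2 * (m e ^ 2 + m e)) / η ^ 2 := h3
  have h4 : 1 / 2 ≤ μ.real G' := by linarith
  set a : ℝ := ∑ e, Real.log (1 + m e) with ha
  have h5 : μ.real G' ≤ G'.ncard * Real.exp (-(a + (y - η))) := by
    rw [Set.ncard_eq_toFinset_card _ hfin]
    have : μ.real G' = ∑ w ∈ hfin.toFinset, μ.real {w} := by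
      rw [sum_measureReal_singleton]; simp
    rw [this, ← nsmul_eq_mul]
    refine Finset.sum_le_card_nsmul _ _ _ fun w hw => ?_
    rw [hpt, Real.exp_le_exp, Finset.sum_add_distrib]
    have : w ∈ G' := by simpa using hw
    have := this.2
    simp only [hY] at this
    linarith
  have h6 : (G'.ncard : ℝ) ≤ G.ncard := by
    exact_mod_cast Set.ncard_le_ncard (Set.sep_subset _ _ : G' ⊆ G) hG
  have h7 : 1 / 2 ≤ (G.ncard : ℝ) * Real.exp (-(a + (y - η))) := by
    refine h4.trans (h5.trans ?_)
    gcongr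
  have h8 : Real.exp (a + (y - η) - Real.log 2) ≤ G.ncard := by
    rw [Real.exp_sub, Real.exp_log (by norm_num)]
    rw [Real.exp_neg] at h7
    have hp := Real.exp_pos (a + (y - η))
    rw [← div_eq_mul_inv, le_div_iff₀ hp] at h7
    linarith
  have h9 := Real.log_le_log (Real.exp_pos _) h8
  rw [Real.log_exp] at h9
  rw [Finset.sum_add_distrib]
  linarith

/-- The entropy of a geometric law of mean `x`. -/
noncomputable def entG (x : ℝ) : ℝ := Real.log (1 + x) + Real.log (1 + 1 / x) * x

theorem log_jensen (lam a b : ℝ) (h0 : 0 ≤ lam) (h1 : lam ≤ 1) (ha : 0 < a) (hb : 0 < b) :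
    lam * Real.log a + (1 - lam) * Real.log b ≤ Real.log (lam * a + (1 - lam) * b) := by
  have := strictConcaveOn_log_Ioi.concaveOn.2 (Set.mem_Ioi.2 ha) (Set.mem_Ioi.2 hb) h0
    (sub_nonneg.2 h1) (by ring)
  simpa using this

theorem gmono (x y : ℝ) (hx : 0 < x) (hxy : x ≤ y) :
    x * Real.log (1 + 1 / x) ≤ y * Real.log (1 + 1 / y) := by
  have hy : 0 < y := lt_of_lt_of_le hx hxy
  have := log_jensen (x / y) (1 + 1 / x) 1 (by positivity) (by rw [div_le_one hy]; exact hxy)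
    (by positivity) one_pos
  have e : x / y * (1 + 1 / x) + (1 - x / y) * 1 = 1 + 1 / y := by field_simp; ring
  rw [e, Real.log_one, mul_zero, add_zero] at this
  calc x * Real.log (1 + 1 / x) = y * (x / y * Real.log (1 + 1 / x)) := by field_simp
    _ ≤ _ := by gcongr

theorem entG_lower (t α : ℝ) (ht : 0 < t) (hα : 0 < α) :
    entG t + t * Real.log (1 + 1 / t) * (1 - 1 / α) ≤ entG (t * α) := by
  set y := t * α with hy
  have hy0 : 0 < y := by positivity
  have hl : ∀ z : ℝ, 0 < z → Real.log (1 + 1 / z) = Real.log (1 + z) - Real.log z := by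
    intro z hz
    rw [← Real.log_div (by positivity) hz.ne']
    congr 1; field_simp; ring
  -- tangent line
  have h1 : entG t + (y - t) * Real.log (1 + 1 / y) ≤ entG y := by
    have := log_jensen (t / (t + 1)) (y / t) 1 (by positivity)
      (by rw [div_le_one (by positivity)]; linarith) (by positivity) one_pos
    have e : t / (t + 1) * (y / t) + (1 - t / (t + 1)) * 1 = (1 + y) / (1 + t) := by
      field_simp; ring
    rw [e, Real.log_one, mul_zero, add_zero, Real.log_div hy0.ne' ht.ne',
      Real.log_div (by positivity) (by positivity)] at this
    have h2 : t * (Real.log y - Real.log t) ≤ (t + 1) * (Real.log (1 + y) - Real.log (1 + t)) := by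
      calc t * (Real.log y - Real.log t)
          = (t + 1) * (t / (t + 1) * (Real.log y - Real.log t)) := by field_simp
        _ ≤ _ := by gcongr
    simp only [entG]
    rw [hl y hy0, hl t ht]
    linarith
  have h2 : t * Real.log (1 + 1 / t) * (1 - 1 / α) ≤ (y - t) * Real.log (1 + 1 / y) := by
    have e : (y - t) * Real.log (1 + 1 / y) = y * Real.log (1 + 1 / y) * (1 - 1 / α) := by
      rw [hy]; field_simp
    rw [e]
    rcases le_total 1 α with h | h
    · have : t ≤ y := by rw [hy]; nlinarith
      have h3 := gmono t y ht this
      have h4 : 0 ≤ 1 - 1 / α := by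
        rw [sub_nonneg, div_le_one hα]; exact h
      exact mul_le_mul_of_nonneg_right h3 h4
    · have : y ≤ t := by rw [hy]; nlinarith
      have h3 := gmono y t hy0 this
      have h4 : 1 - 1 / α ≤ 0 := by
        rw [sub_nonpos, le_div_iff₀ hα]; linarith
      exact mul_le_mul_of_nonpos_right h3 h4
  linarith

theorem entG_lower' (t α : ℝ) (ht : 0 < t) (hα : 1 / 2 ≤ α) :
    entG t + t * Real.log (1 + 1 / t) * ((α - 1) - 2 * (α - 1) ^ 2) ≤ entG (t * α) := by
  have h0 : 0 < α := by linarith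
  refine le_trans ?_ (entG_lower t α ht h0)
  have : 0 ≤ t * Real.log (1 + 1 / t) := by
    refine mul_nonneg ht.le (Real.log_nonneg ?_)
    have : 0 < 1 / t := by positivity
    linarith
  have h2 : (α - 1) - 2 * (α - 1) ^ 2 ≤ 1 - 1 / α := by
    have e : 1 - 1 / α - ((α - 1) - 2 * (α - 1) ^ 2) = (α - 1) ^ 2 * (2 * α - 1) / α := by
      field_simp; ring
    have : 0 ≤ (α - 1) ^ 2 * (2 * α - 1) / α :=
      div_nonneg (mul_nonneg (sq_nonneg _) (by linarith)) h0.le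
    linarith
  gcongr

theorem fin_sum_lt (n x : ℕ) (hx : x ≤ n + 1) (g : ℕ → ℝ) :
    ∑ a : Fin (n + 1), (if (a : ℕ) < x then g a else 0) = ∑ a ∈ range x, g a := by
  rw [Fin.sum_univ_eq_sum_range (fun a => if a < x then g a else 0) (n + 1), ← Finset.sum_filter]
  congr 1
  ext a; simp; omega

theorem sum_id_real (x : ℕ) : ∑ a ∈ range x, (a : ℝ) = x * (x - 1) / 2 := by
  induction x with
  | zero => simp
  | succ k ih => rw [Finset.sum_range_succ, ih]; push_cast; ring

/-- The affine weights. -/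
noncomputable def aff (p q : ℝ) {n : ℕ} (e : FreeEdge n) : ℝ :=
  p - q * (((e.1.2 : ℕ) : ℝ) - ((e.1.1 : ℕ) : ℝ))

theorem cut_sum (n x : ℕ) (hx : x ≤ n) (p q : ℝ) (h0 : q ≤ p) :
    ∑ e : FreeEdge n, (if (e.1.1 : ℕ) < x ∧ x ≤ (e.1.2 : ℕ) then (1 : ℝ) else 0) * aff p q e ≤
      (p - q * ((n : ℝ) + 1) / 2) * (x * (n + 1 - x)) := by
  have h1 := sum_freeEdge n (fun a b : Fin (n + 1) =>
    (if (a : ℕ) < x ∧ x ≤ (b : ℕ) then (1 : ℝ) else 0) * (p - q * (((b : ℕ) : ℝ) - ((a : ℕ) : ℝ))))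
  unfold aff
  rw [h1]
  have h2 : ∀ a b : Fin (n + 1), (if (a : ℕ) + 1 < (b : ℕ) then
      (if (a : ℕ) < x ∧ x ≤ (b : ℕ) then (1 : ℝ) else 0) *
        (p - q * (((b : ℕ) : ℝ) - ((a : ℕ) : ℝ))) else 0) ≤
      (if (a : ℕ) < x then 1 else 0) * (1 - (if (b : ℕ) < x then 1 else 0)) *
        (p - q * (((b : ℕ) : ℝ) - ((a : ℕ) : ℝ))) := by
    intro a b
    by_cases ha : (a : ℕ) < x
    · by_cases hb : (b : ℕ) < x
      · have : ¬ (x ≤ (b : ℕ)) := by omega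
        simp [hb, this]
      · have hb' : x ≤ (b : ℕ) := by omega
        simp only [ha, hb, hb', and_self, if_true, if_false]
        split_ifs with h
        · linarith
        · have : (b : ℕ) = a + 1 := by omega
          rw [this]; push_cast; linarith
    · simp [ha]
  refine (Finset.sum_le_sum fun a _ => Finset.sum_le_sum fun b _ => h2 a b).trans (le_of_eq ?_)
  have hU := fin_sum_lt n x (by omega) (fun _ => 1)
  have hA := fin_sum_lt n x (by omega) (fun a => (a : ℝ))
  have hT := Fin.sum_univ_eq_sum_range (fun a => (a : ℝ)) (n + 1)
  rw [sum_id_real] at hA hT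
  simp only [Finset.sum_const, Finset.card_range, nsmul_eq_mul, mul_one] at hU
  set u : Fin (n + 1) → ℝ := fun a => if (a : ℕ) < x then 1 else 0 with hu
  have hA' : ∑ a : Fin (n + 1), u a * ((a : ℕ) : ℝ) = x * (x - 1) / 2 := by
    rw [← hA]; refine Finset.sum_congr rfl fun a _ => ?_
    simp only [hu]; split_ifs <;> simp
  have hU' : ∑ a : Fin (n + 1), u a = x := hU
  have hV : ∑ a : Fin (n + 1), (1 - u a) = (n : ℝ) + 1 - x := by
    rw [Finset.sum_sub_distrib, hU']; simp
  have hVb : ∑ b : Fin (n + 1), (1 - u b) * ((b : ℕ) : ℝ) =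
      ((n : ℝ) + 1) * n / 2 - x * (x - 1) / 2 := by
    simp only [sub_mul, one_mul]
    rw [Finset.sum_sub_distrib, hA', hT]; push_cast; ring
  have h3 : ∀ a b : Fin (n + 1), u a * (1 - u b) * (p - q * (((b : ℕ) : ℝ) - ((a : ℕ) : ℝ))) =
      p * (u a * (1 - u b)) - q * (u a * ((1 - u b) * ((b : ℕ) : ℝ))) +
        q * ((u a * ((a : ℕ) : ℝ)) * (1 - u b)) := by intro a b; ring
  change ∑ a, ∑ b, u a * (1 - u b) * (p - q * (((b : ℕ) : ℝ) - ((a : ℕ) : ℝ))) = _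
  simp only [h3, Finset.sum_add_distrib, Finset.sum_sub_distrib, ← Finset.mul_sum,
    ← Finset.sum_mul, hU', hA', hV, hVb]
  ring

theorem total_sum (n : ℕ) (p q : ℝ) :
    ∑ e : FreeEdge n, aff p q e =
      p * (n * (n - 1) / 2) - q * (n * (n - 1) * (n + 4) / 6) := by
  unfold aff
  rw [sum_freeEdge n (fun a b : Fin (n + 1) => p - q * (((b : ℕ) : ℝ) - ((a : ℕ) : ℝ))),
    Finset.sum_comm]
  have h1 : ∀ c : ℕ, ∑ a ∈ range c, (p - q * (((c : ℝ) + 1) - a)) =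
      p * c - q * (c * (c + 3) / 2) := by
    intro c
    have e : ∀ a : ℕ, (p - q * (((c : ℝ) + 1) - a)) = (p - q * ((c : ℝ) + 1)) + q * a := by
      intro a; ring
    simp only [e, Finset.sum_add_distrib, ← Finset.mul_sum, sum_id_real]
    simp; ring
  have h2 : ∀ b : Fin (n + 1), (∑ a : Fin (n + 1), if (a : ℕ) + 1 < (b : ℕ) then
      p - q * (((b : ℕ) : ℝ) - ((a : ℕ) : ℝ)) else 0) =
      (fun b : ℕ => p * ((b - 1 : ℕ) : ℝ) - q * (((b - 1 : ℕ) : ℝ) * (((b - 1 : ℕ) : ℝ) + 3) / 2))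
        (b : ℕ) := by
    intro b
    have hb := b.isLt
    have h3 := fin_sum_lt n ((b : ℕ) - 1) (by omega) (fun a => p - q * (((b : ℕ) : ℝ) - (a : ℝ)))
    have e : ∀ a : ℕ, (a + 1 < (b : ℕ)) = (a < (b : ℕ) - 1) := by intro a; ext; omega
    simp only [e]
    rw [h3]
    rcases Nat.eq_zero_or_pos (b : ℕ) with h | h
    · simp [h]
    · obtain ⟨c, hc⟩ : ∃ c, (b : ℕ) = c + 1 := ⟨(b : ℕ) - 1, by omega⟩
      simp only [hc, Nat.add_sub_cancel]
      rw [← h1 c]; push_cast; rfl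
  simp only [h2]
  rw [Fin.sum_univ_eq_sum_range (fun b : ℕ => p * ((b - 1 : ℕ) : ℝ) -
    q * (((b - 1 : ℕ) : ℝ) * (((b - 1 : ℕ) : ℝ) + 3) / 2)) (n + 1), Finset.sum_range_succ']
  simp only [Nat.add_sub_cancel]
  have h4 : ∀ k : ℕ, ∑ c ∈ range k, (p * (c : ℝ) - q * ((c : ℝ) * ((c : ℝ) + 3) / 2)) =
      p * (k * (k - 1) / 2) - q * (k * (k - 1) * (k + 4) / 6) := by
    intro k
    induction k with
    | zero => simp
    | succ k ih => rw [Finset.sum_range_succ, ih]; push_cast; ring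
  rw [h4]; simp

theorem inv_sum (n : ℕ) (hn : 1 ≤ n) :
    ∑ x ∈ Finset.Icc 1 n, 1 / ((x : ℝ) * (n + 1 - x)) ≤ 6 / Real.sqrt n := by
  have hn' : (1 : ℝ) ≤ n := by exact_mod_cast hn
  have h1 : ∑ x ∈ Finset.Icc 1 n, 1 / ((x : ℝ) * (n + 1 - x)) =
      (1 / ((n : ℝ) + 1)) * (∑ x ∈ Finset.Icc 1 n, (1 / (x : ℝ)) +
        ∑ x ∈ Finset.Icc 1 n, 1 / ((n : ℝ) + 1 - x)) := by
    rw [← Finset.sum_add_distrib, Finset.mul_sum]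
    refine Finset.sum_congr rfl fun x hx => ?_
    rw [Finset.mem_Icc] at hx
    have hx1 : (0 : ℝ) < x := by exact_mod_cast hx.1
    have hx2 : (0 : ℝ) < (n : ℝ) + 1 - x := by
      have : (x : ℝ) ≤ n := by exact_mod_cast hx.2
      linarith
    field_simp
    ring
  have h2 : ∑ x ∈ Finset.Icc 1 n, 1 / ((n : ℝ) + 1 - x) = ∑ x ∈ Finset.Icc 1 n, (1 / (x : ℝ)) := by
    refine Finset.sum_nbij' (fun x => n + 1 - x) (fun x => n + 1 - x) ?_ ?_ ?_ ?_ ?_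
    · intro x hx; simp at hx ⊢; omega
    · intro x hx; simp at hx ⊢; omega
    · intro x hx; simp at hx ⊢; omega
    · intro x hx; simp at hx ⊢; omega
    · intro x hx
      simp at hx
      rw [Nat.cast_sub (by omega)]; push_cast; rfl
  have h3 : ∑ x ∈ Finset.Icc 1 n, (1 / (x : ℝ)) ≤ 1 + Real.log n := by
    have := harmonic_le_one_add_log n
    rw [harmonic_eq_sum_Icc] at this
    push_cast at this
    simpa [one_div] using this
  have hs : 1 ≤ Real.sqrt n := by rw [Real.one_le_sqrt]; exact hn'
  have h4 : Real.log n ≤ 2 * Real.sqrt n := by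
    have := Real.log_le_sub_one_of_pos (lt_of_lt_of_le one_pos hs)
    rw [Real.log_sqrt (by positivity)] at this
    linarith
  have hss : Real.sqrt n * Real.sqrt n = n := Real.mul_self_sqrt (by positivity)
  rw [h1, h2, one_div, inv_mul_le_iff₀ (by positivity), ← mul_div_assoc, le_div_iff₀ (by linarith)]
  nlinarith

theorem large_case (t n : ℕ) (ht : 1 ≤ t) (hn : 10 ^ 18 ≤ n) :
    (n : ℝ) * (n - 1) / 2 * entG t - Real.log 2 ≤
      Real.log (Kn n fun i => (t : ℤ) * ((n : ℤ) - 2 * ((i : ℕ) : ℤ))) := by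
  have ht' : (1 : ℝ) ≤ t := by exact_mod_cast ht
  have ht0 : (0 : ℝ) < t := by linarith
  have hn' : (10 : ℝ) ^ 18 ≤ n := by exact_mod_cast hn
  have hn1 : (0 : ℝ) < (n : ℝ) + 1 := by positivity
  have hn0 : (0 : ℝ) < n := lt_of_lt_of_le (by positivity) hn'
  set p : ℝ := 1 - 1 / 1200 + 1 / 200 with hp
  set q : ℝ := 1 / 100 / ((n : ℝ) + 1) with hq
  have hq0 : 0 < q := by positivity
  have hqn : q * ((n : ℝ) + 1) = 1 / 100 := by rw [hq]; field_simp
  have hqp : q ≤ p := by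
    have h1 : 0 < q * (n : ℝ) := by positivity
    have h3 : q ≤ 1 / 100 := by linarith [hqn, mul_add q (n:ℝ) 1, mul_one q]
    have h4 : (1 / 100 : ℝ) ≤ p := by rw [hp]; norm_num
    exact h3.trans h4
  set α : FreeEdge n → ℝ := fun e => aff p q e with hα
  have hαb : ∀ e, 1 - 7 / 1200 ≤ α e ∧ α e ≤ 1 + 5 / 1200 := by
    intro e
    simp only [hα, aff]
    have h1 : (e.1.1 : ℕ) + 1 < (e.1.2 : ℕ) := e.2
    have h1' : ((e.1.1 : ℕ) : ℝ) + 1 < ((e.1.2 : ℕ) : ℝ) := by exact_mod_cast h1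
    have h2 : (e.1.2 : ℕ) < n + 1 := e.1.2.isLt
    have h2' : ((e.1.2 : ℕ) : ℝ) < (n : ℝ) + 1 := by exact_mod_cast h2
    have h3 : (0 : ℝ) ≤ ((e.1.1 : ℕ) : ℝ) := by positivity
    constructor
    · nlinarith
    · nlinarith
  set m : FreeEdge n → ℝ := fun e => t * α e with hm
  have hmb : ∀ e, 1 / 2 ≤ m e ∧ m e ≤ 2 * t := by
    intro e
    obtain ⟨h1, h2⟩ := hαb e
    simp only [hm]
    constructor <;> nlinarith
  have hmpos : ∀ e, 0 < m e := fun e => by linarith [(hmb e).1]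
  obtain ⟨hGfin, hGcard⟩ := kn_ge n t _ rfl
  set G : Set (FreeEdge n → ℕ) := {w | ∀ x ∈ Finset.Icc 1 n, cutX n w x ≤ t * x * (n + 1 - x)}
    with hG
  let c : ℕ → FreeEdge n → ℝ := fun x e =>
    if (e.1.1 : ℕ) < x ∧ x ≤ (e.1.2 : ℕ) then (1 : ℝ) else 0
  have hcard : ∑ e : FreeEdge n, (1 : ℝ) = n * (n - 1) / 2 := by
    have := total_sum n 1 0
    simpa [aff] using this
  have hxpos : ∀ x ∈ Finset.Icc 1 n, (0 : ℝ) < (x : ℝ) * (n + 1 - x) := by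
    intro x hx
    rw [Finset.mem_Icc] at hx
    have h1 : (1 : ℝ) ≤ x := by exact_mod_cast hx.1
    have h2 : (x : ℝ) ≤ n := by exact_mod_cast hx.2
    exact mul_pos (by linarith) (by linarith)
  have hcsum : ∀ x ∈ Finset.Icc 1 n, ∑ e, c x e ≤ (x : ℝ) * (n + 1 - x) := by
    intro x hx
    rw [Finset.mem_Icc] at hx
    have := cut_sum n x hx.2 1 0 (by norm_num)
    simpa [aff, c] using this
  have hmain := count_lemma m hmpos (Finset.Icc 1 n) c
    (fun x => (t : ℝ) * (x * (n + 1 - x))) (fun x => 1 / 1200 * (t : ℝ) * (x * (n + 1 - x)))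
    (fun x hx => mul_pos (by positivity) (hxpos x hx))
    (by
      intro x hx
      rw [Finset.mem_Icc] at hx
      have := cut_sum n x hx.2 p q hqp
      have e1 : ∑ e, c x e * m e = t * ∑ e, c x e * aff p q e := by
        rw [Finset.mul_sum]
        refine Finset.sum_congr rfl fun e _ => ?_
        simp only [hm, hα]; ring
      have e2 : p - q * ((n : ℝ) + 1) / 2 = 1 - 1 / 1200 := by rw [hqn, hp]; norm_num
      rw [e2] at this
      have h3 := mul_le_mul_of_nonneg_left this ht0.le
      simp only [c] at e1 ⊢
      rw [e1]
      linarith)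
    ((n : ℝ) ^ 2 / 8000) (by positivity) G hGfin
    (by
      intro w hw
      simp only [hG, Set.mem_ofPred_eq]
      intro x hx
      have h := hw x hx
      have hx' := hx
      rw [Finset.mem_Icc] at hx'
      have e1 : ((cutX n w x : ℕ) : ℝ) = ∑ e, c x e * (w e : ℝ) := by
        rw [cutX_eq]; push_cast
        refine Finset.sum_congr rfl fun e _ => ?_
        simp only [c]; split_ifs <;> simp
      rw [← e1] at h
      have e2 : ((t * x * (n + 1 - x) : ℕ) : ℝ) = (t : ℝ) * (x * (n + 1 - x)) := by
        push_cast [Nat.cast_sub (show x ≤ n + 1 by omega)]; ring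
      rw [← e2] at h
      exact_mod_cast h)
    (by
      have hA : ∑ x ∈ Finset.Icc 1 n, (∑ e, c x e ^ 2 * (m e ^ 2 + m e)) /
          (1 / 1200 * (t : ℝ) * (x * (n + 1 - x))) ^ 2 ≤ 1 / 4 := by
        have h1 : ∀ x ∈ Finset.Icc 1 n, (∑ e, c x e ^ 2 * (m e ^ 2 + m e)) /
            (1 / 1200 * (t : ℝ) * (x * (n + 1 - x))) ^ 2 ≤
            8640000 * (1 / ((x : ℝ) * (n + 1 - x))) := by
          intro x hx
          have hz := hxpos x hx
          have hs := hcsum x hx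
          set z : ℝ := (x : ℝ) * (n + 1 - x) with hzdef
          have h2 : ∑ e, c x e ^ 2 * (m e ^ 2 + m e) ≤ 6 * (t : ℝ) ^ 2 * z := by
            calc ∑ e, c x e ^ 2 * (m e ^ 2 + m e) ≤ ∑ e, 6 * (t : ℝ) ^ 2 * c x e := by
                  refine Finset.sum_le_sum fun e _ => ?_
                  have hb := hmb e
                  simp only [c]
                  split_ifs
                  · nlinarith
                  · simp
              _ = 6 * (t : ℝ) ^ 2 * ∑ e, c x e := by rw [Finset.mul_sum]
              _ ≤ _ := by gcongr
          rw [div_le_iff₀ (by positivity)]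
          refine h2.trans (le_of_eq ?_)
          field_simp
          norm_num
        refine (Finset.sum_le_sum h1).trans ?_
        rw [← Finset.mul_sum]
        have h2 := inv_sum n (by omega)
        have h3 : (10 : ℝ) ^ 9 ≤ Real.sqrt n := by
          apply Real.le_sqrt_of_sq_le
          rw [← pow_mul]; exact hn'
        have h4 : 6 / Real.sqrt n ≤ 6 / 10 ^ 9 := by gcongr
        have h5 := h2.trans h4
        calc _ ≤ 8640000 * (6 / (10 : ℝ) ^ 9) := by gcongr
          _ ≤ _ := by norm_num
      have hB : (∑ e, Real.log (1 + 1 / m e) ^ 2 * (m e ^ 2 + m e)) / ((n : ℝ) ^ 2 / 8000) ^ 2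
          ≤ 1 / 4 := by
        have h1 : ∑ e, Real.log (1 + 1 / m e) ^ 2 * (m e ^ 2 + m e) ≤ ∑ e : FreeEdge n, 3 * (1 : ℝ) := by
          refine Finset.sum_le_sum fun e _ => ?_
          have h0 := hmpos e
          have hb := (hmb e).1
          have hi : 0 < 1 / m e := by positivity
          have h2 : Real.log (1 + 1 / m e) ≤ 1 / m e := by
            have := Real.log_le_sub_one_of_pos (show 0 < 1 + 1 / m e by positivity)
            linarith
          have h3 : 0 ≤ Real.log (1 + 1 / m e) := Real.log_nonneg (by linarith)
          calc Real.log (1 + 1 / m e) ^ 2 * (m e ^ 2 + m e)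
              ≤ (1 / m e) ^ 2 * (m e ^ 2 + m e) := by gcongr
            _ = 1 + 1 / m e := by field_simp
            _ ≤ 3 * 1 := by
              have : 1 / m e ≤ 2 := by rw [div_le_iff₀ h0]; linarith
              linarith
        rw [← Finset.mul_sum, hcard] at h1
        rw [div_le_iff₀ (by positivity)]
        refine h1.trans ?_
        have h6 : (10 : ℝ) ^ 18 * 10 ^ 18 ≤ (n : ℝ) ^ 2 := by rw [sq]; gcongr
        have h7 : (n : ℝ) ^ 2 * (10 ^ 18 * 10 ^ 18) ≤ (n : ℝ) ^ 2 * (n : ℝ) ^ 2 := by gcongr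
        have h8 : 0 < (n : ℝ) ^ 2 := by positivity
        have e : ((n : ℝ) ^ 2 / 8000) ^ 2 = (n : ℝ) ^ 2 * (n : ℝ) ^ 2 / 64000000 := by ring
        rw [e]
        nlinarith
      linarith)
  -- entropy estimate
  set g : ℝ := t * Real.log (1 + 1 / (t : ℝ)) with hg
  have hghalf : 1 / 2 ≤ g := by
    have := gmono 1 t one_pos ht'
    have h2 := Real.log_two_gt_d9
    norm_num at this
    simp only [hg, one_div]
    linarith
  have hS : (n : ℝ) ^ 2 / 4000 ≤ ∑ e, ((α e - 1) - 2 * (α e - 1) ^ 2) := by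
    have h1 : ∀ e, (α e - 1) - 1 / 10000 * 1 ≤ (α e - 1) - 2 * (α e - 1) ^ 2 := by
      intro e
      obtain ⟨a, b⟩ := hαb e
      nlinarith
    refine le_trans ?_ (Finset.sum_le_sum fun e _ => h1 e)
    rw [Finset.sum_sub_distrib, Finset.sum_sub_distrib, ← Finset.mul_sum, hcard, hα,
      total_sum n p q]
    have h2 : q * ((n : ℝ) * (n - 1) * (n + 4) / 6) =
        1 / 600 * ((n : ℝ) * (n - 1)) + q * ((n : ℝ) * (n - 1)) / 2 := by
      linear_combination ((n : ℝ) * (n - 1) / 6) * hqn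
    have h3 : q * ((n : ℝ) * (n - 1)) ≤ n / 100 := by
      have : q * ((n : ℝ) - 1) ≤ 1 / 100 := by nlinarith
      nlinarith
    rw [h2, hp]
    nlinarith
  have hE : (n : ℝ) * (n - 1) / 2 * entG t + (n : ℝ) ^ 2 / 8000 ≤
      ∑ e, (Real.log (1 + m e) + Real.log (1 + 1 / m e) * m e) := by
    have h1 : ∀ e, entG t * 1 + g * ((α e - 1) - 2 * (α e - 1) ^ 2) ≤
        Real.log (1 + m e) + Real.log (1 + 1 / m e) * m e := by
      intro e
      have := entG_lower' t (α e) ht0 (by linarith [(hαb e).1])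
      rw [mul_one]
      exact this
    refine le_trans ?_ (Finset.sum_le_sum fun e _ => h1 e)
    rw [Finset.sum_add_distrib, ← Finset.mul_sum, ← Finset.mul_sum, hcard]
    have h2 : 0 ≤ (n : ℝ) ^ 2 / 4000 := by positivity
    nlinarith
  have hlog : (n : ℝ) * (n - 1) / 2 * entG t - Real.log 2 ≤ Real.log G.ncard := by linarith
  refine hlog.trans ?_
  rcases Nat.eq_zero_or_pos G.ncard with h | h
  · rw [h]; simp [Real.log_natCast_nonneg]
  · exact Real.log_le_log (by exact_mod_cast h) (by exact_mod_cast hGcard)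

/-- **Theorem (the `t·2ρ` case).** There is a constant `C > 0` such that for all
integers `t ≥ 1` and `n ≥ 2`,
`log K_n(t·(n, n−2, …, −n+2, −n)) ≥ (n²/2)·log((1+t)^{1+t}/t^t) − C·n·log(n·t)`. -/
theorem kostant_two_rho_lower_bound :
    ∃ C : ℝ, 0 < C ∧ ∀ t n : ℕ, 1 ≤ t → 2 ≤ n →
      ((n : ℝ) ^ 2 / 2) * Real.log ((1 + (t : ℝ)) ^ (1 + t) / (t : ℝ) ^ t) -
          C * n * Real.log ((n : ℝ) * t) ≤
        Real.log (Kn n fun i => (t : ℤ) * ((n : ℤ) - 2 * ((i : ℕ) : ℤ))) := by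
  refine ⟨10 ^ 19, by positivity, ?_⟩
  intro t n ht hn
  have ht' : (1 : ℝ) ≤ t := by exact_mod_cast ht
  have ht0 : (0 : ℝ) < t := by linarith
  have hn' : (2 : ℝ) ≤ n := by exact_mod_cast hn
  have hH : Real.log ((1 + (t : ℝ)) ^ (1 + t) / (t : ℝ) ^ t) = entG t := by
    rw [Real.log_div (by positivity) (by positivity), Real.log_pow, Real.log_pow, entG]
    have : Real.log (1 + 1 / (t : ℝ)) = Real.log (1 + t) - Real.log t := by
      rw [← Real.log_div (by positivity) ht0.ne']
      congr 1; field_simp; ring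
    rw [this]; push_cast; ring
  rw [hH]
  set L := Real.log ((n : ℝ) * t) with hL
  have hl2 := Real.log_two_gt_d9
  have hL2 : Real.log 2 ≤ L := Real.log_le_log (by norm_num) (by nlinarith)
  have hL1 : Real.log (1 + (t : ℝ)) ≤ L := Real.log_le_log (by positivity) (by nlinarith)
  have hent : entG t ≤ 3 * L := by
    have : Real.log (1 + 1 / (t : ℝ)) ≤ 1 / t := by
      have := Real.log_le_sub_one_of_pos (show 0 < 1 + 1 / (t : ℝ) by positivity)
      linarith
    have h2 : Real.log (1 + 1 / (t : ℝ)) * t ≤ 1 := by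
      calc _ ≤ 1 / (t : ℝ) * t := by gcongr
        _ = 1 := by field_simp
    unfold entG
    linarith
  have hLpos : 0 < L := by linarith
  have hnL : 0 < (n : ℝ) * L := by positivity
  by_cases hbig : 10 ^ 18 ≤ n
  · refine le_trans ?_ (large_case t n ht hbig)
    have h1 : (n : ℝ) / 2 * entG t ≤ n / 2 * (3 * L) := by gcongr
    have h2 : Real.log 2 ≤ n * L := by nlinarith
    nlinarith
  · refine le_trans ?_ (Real.log_natCast_nonneg _)
    have h0 : (n : ℝ) ≤ 10 ^ 18 := by
      have : n ≤ 10 ^ 18 := by omega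
      exact_mod_cast this
    have h1 : (n : ℝ) ^ 2 / 2 * entG t ≤ (n : ℝ) ^ 2 / 2 * (3 * L) := by gcongr
    have h2 : (n : ℝ) * ((n : ℝ) * L) ≤ 10 ^ 18 * (n * L) := by gcongr
    nlinarith
end
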